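/- arXiv:2108.13379 — 3 statements merged into one kernel-verified Lean document; each statement's English description precedes it below -/
import Mathlib

section
/- (Vanishing of the good null components of the approximate mass metric.) Let M ∈ ℝ and Ω := {(t,x) ∈ ℝ^{1+3} : |x| > 0 and |x| > 2M}. Define the time-independent symmetric 2-tensor h̃ on Ω by h̃_{00} := 2M/r, h̃_{0i} := 0, h̃_{ij} := −(4M log(r−2M)/r) δ_{ij} − (x_i x_j/r²)(2M/r − 4M log(r−2M)/r), with r = |x|. Then on Ω: (i) h̃_{αβ}L^αL^β = 0; (ii) h̃_{αβ}L^α(E^A)^β = 0 for A = 1,2,3; and (iii) for each of the 11 Minkowskian commuting vector fields Γ, (Γh̃)_{αβ}L^αL^β = 0, where (Γh̃)_{αβ} denotes componentwise application of Γ to the components h̃_{αβ}. -/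
open MeasureTheory

noncomputable def pd (μ : Fin 4) (f : (Fin 4 → ℝ) → ℝ) (x : Fin 4 → ℝ) : ℝ :=
  fderiv ℝ f x (Pi.single μ 1)

noncomputable def pd3 (i : Fin 3) (f : (Fin 3 → ℝ) → ℝ) (x : Fin 3 → ℝ) : ℝ :=
  fderiv ℝ f x (Pi.single i 1)

noncomputable def rad (p : Fin 4 → ℝ) : ℝ := Real.sqrt (∑ i : Fin 3, (p i.succ) ^ 2)

noncomputable def rad3 (y : Fin 3 → ℝ) : ℝ := Real.sqrt (∑ i : Fin 3, (y i) ^ 2)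

noncomputable def spt (t : ℝ) (y : Fin 3 → ℝ) : Fin 4 → ℝ := ![t, y 0, y 1, y 2]

noncomputable def minkVF : Fin 11 → (Fin 4 → ℝ) → Fin 4 → ℝ :=
  ![fun _ => Pi.single 0 1,
    fun _ => Pi.single 1 1,
    fun _ => Pi.single 2 1,
    fun _ => Pi.single 3 1,
    fun p => p 1 • (Pi.single 2 1 : Fin 4 → ℝ) - p 2 • (Pi.single 1 1 : Fin 4 → ℝ),
    fun p => p 1 • (Pi.single 3 1 : Fin 4 → ℝ) - p 3 • (Pi.single 1 1 : Fin 4 → ℝ),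
    fun p => p 2 • (Pi.single 3 1 : Fin 4 → ℝ) - p 3 • (Pi.single 2 1 : Fin 4 → ℝ),
    fun p => p 0 • (Pi.single 1 1 : Fin 4 → ℝ) + p 1 • (Pi.single 0 1 : Fin 4 → ℝ),
    fun p => p 0 • (Pi.single 2 1 : Fin 4 → ℝ) + p 2 • (Pi.single 0 1 : Fin 4 → ℝ),
    fun p => p 0 • (Pi.single 3 1 : Fin 4 → ℝ) + p 3 • (Pi.single 0 1 : Fin 4 → ℝ),
    fun p => p]

noncomputable def GammaList : List (Fin 11) → ((Fin 4 → ℝ) → ℝ) → (Fin 4 → ℝ) → ℝ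
  | [] => fun f p => f p
  | k :: I => fun f p => fderiv ℝ (GammaList I f) p (minkVF k p)

noncomputable def derivNormSq (f : (Fin 4 → ℝ) → ℝ) (p : Fin 4 → ℝ) : ℝ :=
  ∑ μ : Fin 4, (pd μ f p) ^ 2

noncomputable def derivNorm (f : (Fin 4 → ℝ) → ℝ) (p : Fin 4 → ℝ) : ℝ :=
  Real.sqrt (derivNormSq f p)

noncomputable def dS (f : (Fin 4 → ℝ) → ℝ) (p : Fin 4 → ℝ) : ℝ :=
  (1 / 2) * (pd 0 f p + ∑ i : Fin 3, (p i.succ / rad p) * pd i.succ f p)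

noncomputable def dQ (f : (Fin 4 → ℝ) → ℝ) (p : Fin 4 → ℝ) : ℝ :=
  (1 / 2) * ((∑ i : Fin 3, (p i.succ / rad p) * pd i.succ f p) - pd 0 f p)

noncomputable def angSq (f : (Fin 4 → ℝ) → ℝ) (p : Fin 4 → ℝ) : ℝ :=
  (1 / 2) * (∑ i : Fin 3, ∑ j : Fin 3,
    ((p i.succ / rad p) * pd j.succ f p - (p j.succ / rad p) * pd i.succ f p) ^ 2)

noncomputable def goodNormSq (f : (Fin 4 → ℝ) → ℝ) (p : Fin 4 → ℝ) : ℝ :=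
  (dS f p) ^ 2 + angSq f p

noncomputable def goodNorm (f : (Fin 4 → ℝ) → ℝ) (p : Fin 4 → ℝ) : ℝ :=
  Real.sqrt (goodNormSq f p)

noncomputable def gradSq (f : (Fin 4 → ℝ) → ℝ) (p : Fin 4 → ℝ) : ℝ :=
  (pd 0 f p) ^ 2 + ∑ i : Fin 3, (pd i.succ f p) ^ 2

noncomputable def Lup (p : Fin 4 → ℝ) : Fin 4 → ℝ :=
  ![1, p 1 / rad p, p 2 / rad p, p 3 / rad p]

noncomputable def Llow (p : Fin 4 → ℝ) : Fin 4 → ℝ :=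
  ![-1, p 1 / rad p, p 2 / rad p, p 3 / rad p]

noncomputable def Lbup (p : Fin 4 → ℝ) : Fin 4 → ℝ :=
  ![1, -(p 1 / rad p), -(p 2 / rad p), -(p 3 / rad p)]

noncomputable def Evec : Fin 3 → (Fin 4 → ℝ) → Fin 4 → ℝ :=
  ![fun p => (p 2 / rad p) • (Pi.single 3 1 : Fin 4 → ℝ) - (p 3 / rad p) • (Pi.single 2 1 : Fin 4 → ℝ),
    fun p => (p 1 / rad p) • (Pi.single 3 1 : Fin 4 → ℝ) - (p 3 / rad p) • (Pi.single 1 1 : Fin 4 → ℝ),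
    fun p => (p 1 / rad p) • (Pi.single 2 1 : Fin 4 → ℝ) - (p 2 / rad p) • (Pi.single 1 1 : Fin 4 → ℝ)]

noncomputable def frameVF : Fin 5 → (Fin 4 → ℝ) → Fin 4 → ℝ :=
  ![Lup, Lbup, Evec 0, Evec 1, Evec 2]

noncomputable def mInv : Fin 4 → Fin 4 → ℝ :=
  fun α β => if α = β then (if α = 0 then -1 else 1) else 0

noncomputable def wgt (γ q : ℝ) : ℝ :=
  if 0 ≤ q then 1 + (1 + |q|) ^ (1 + 2 * γ) else 1 + (1 + |q|) ^ (-(γ / 2))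

noncomputable def wgt' (γ q : ℝ) : ℝ :=
  if 0 ≤ q then (1 + 2 * γ) * (1 + |q|) ^ (2 * γ) else (γ / 2) * (1 + |q|) ^ (-(γ / 2) - 1)

noncomputable def matNorm (H : (Fin 4 → ℝ) → Fin 4 → Fin 4 → ℝ) (p : Fin 4 → ℝ) : ℝ :=
  Real.sqrt (∑ α : Fin 4, ∑ β : Fin 4, (H p α β) ^ 2)

noncomputable def matLL (H : (Fin 4 → ℝ) → Fin 4 → Fin 4 → ℝ) (p : Fin 4 → ℝ) : ℝ :=
  |∑ α : Fin 4, ∑ β : Fin 4, H p α β * Llow p α * Llow p β|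

noncomputable def dmatNorm (H : (Fin 4 → ℝ) → Fin 4 → Fin 4 → ℝ) (p : Fin 4 → ℝ) : ℝ :=
  Real.sqrt (∑ c : Fin 4, ∑ α : Fin 4, ∑ β : Fin 4, (pd c (fun y => H y α β) p) ^ 2)

noncomputable def dmatLL (H : (Fin 4 → ℝ) → Fin 4 → Fin 4 → ℝ) (p : Fin 4 → ℝ) : ℝ :=
  Real.sqrt (∑ u : Fin 5,
    (∑ α : Fin 4, ∑ β : Fin 4,
      fderiv ℝ (fun y => H y α β) p (frameVF u p) * Llow p α * Llow p β) ^ 2)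

noncomputable def gdmatNorm (H : (Fin 4 → ℝ) → Fin 4 → Fin 4 → ℝ) (p : Fin 4 → ℝ) : ℝ :=
  Real.sqrt (∑ α : Fin 4, ∑ β : Fin 4, goodNormSq (fun y => H y α β) p)

/-- The (time-independent) approximate mass metric perturbation `h̃_{μν}` as a function
on spacetime: `h̃_{00} = 2M/r`, `h̃_{0i} = 0`,
`h̃_{ij} = −(4M log(r−2M)/r)δ_{ij} − (x_i x_j/r²)(2M/r − 4M log(r−2M)/r)`. -/
noncomputable def hS17 (M : ℝ) (p : Fin 4 → ℝ) : Fin 4 → Fin 4 → ℝ :=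
  Fin.cons (Fin.cons (2 * M / rad p) (fun _ : Fin 3 => 0))
    (fun i : Fin 3 => Fin.cons 0 (fun j : Fin 3 =>
      -(4 * M * Real.log (rad p - 2 * M) / rad p) * (if i = j then 1 else 0)
        - (p i.succ * p j.succ / (rad p) ^ 2)
            * (2 * M / rad p - 4 * M * Real.log (rad p - 2 * M) / rad p)))

/-!
Write `ω = x / r`. The tensor `h̃` is a pointwise multiple of the Minkowski metric `m` on each of
two `m`-orthogonal blocks: with `a = 2M/r` and `b = 4M log(r - 2M)/r` it equals `a (dt² - dr²)`
minus `b` times the metric `r² dω²` of the spheres. Since `L` lies in the `(t, r)`-block,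
`h̃(L, ·) = -a m(L, ·)`. As `L` is null and orthogonal to the spheres, this gives (i) and (ii).
Differentiating `h̃(L, L) = 0` along `Γ` leaves `(Γh̃)(L, L) = -2 h̃(L, ΓL) = 2a m(L, ΓL)`, and
`m(L, ΓL) = 0` is the derivative of `m(L, L) = 0`.
-/

open scoped Topology

section TensorContract

variable {ι E : Type*} [Fintype ι] [NormedAddCommGroup E] [NormedSpace ℝ E]

/-- The contraction `H_{αβ} X^α Y^β` of a covariant 2-tensor with two vectors, all given by their
components. -/
def tensorContract (H : ι → ι → ℝ) (X Y : ι → ℝ) : ℝ :=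
  ∑ α, ∑ β, H α β * X α * Y β

theorem tensorContract_comm {H : ι → ι → ℝ} (hH : ∀ α β, H α β = H β α) (X Y : ι → ℝ) :
    tensorContract H X Y = tensorContract H Y X := by
  unfold tensorContract
  rw [Finset.sum_comm]
  exact Finset.sum_congr rfl fun α _ => Finset.sum_congr rfl fun β _ => by
    rw [hH β α, mul_right_comm]

theorem fderiv_tensorContract {H : E → ι → ι → ℝ} {X Y : E → ι → ℝ} {p : E}
    (hH : ∀ α β, DifferentiableAt ℝ (fun y => H y α β) p)
    (hX : ∀ α, DifferentiableAt ℝ (fun y => X y α) p)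
    (hY : ∀ α, DifferentiableAt ℝ (fun y => Y y α) p) (v : E) :
    fderiv ℝ (fun y => tensorContract (H y) (X y) (Y y)) p v =
      tensorContract (fun α β => fderiv ℝ (fun y => H y α β) p v) (X p) (Y p) +
        tensorContract (H p) (fun α => fderiv ℝ (fun y => X y α) p v) (Y p) +
        tensorContract (H p) (X p) (fun α => fderiv ℝ (fun y => Y y α) p v) := by
  have hsum := HasFDerivAt.fun_sum (u := Finset.univ) fun α _ =>
    HasFDerivAt.fun_sum (u := Finset.univ) fun β _ =>
      ((hH α β).hasFDerivAt.fun_mul (hX α).hasFDerivAt).fun_mul (hY β).hasFDerivAt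
  unfold tensorContract
  simp only [hsum.fderiv, ← Finset.sum_add_distrib, sum_apply, add_apply, smul_apply,
    smul_eq_mul]
  exact Finset.sum_congr rfl fun α _ => Finset.sum_congr rfl fun β _ => by ring

theorem tensorContract_fderiv_self_of_null {H : E → ι → ι → ℝ} {X : E → ι → ℝ} {p : E}
    (hH : ∀ α β, DifferentiableAt ℝ (fun y => H y α β) p)
    (hX : ∀ α, DifferentiableAt ℝ (fun y => X y α) p)
    (hsymm : ∀ α β, H p α β = H p β α)
    (hnull : ∀ᶠ y in 𝓝 p, tensorContract (H y) (X y) (X y) = 0) (v : E) :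
    tensorContract (fun α β => fderiv ℝ (fun y => H y α β) p v) (X p) (X p) =
      -2 * tensorContract (H p) (X p) (fun α => fderiv ℝ (fun y => X y α) p v) := by
  have hleibniz := fderiv_tensorContract hH hX hX v
  have hzero : fderiv ℝ (fun y => tensorContract (H y) (X y) (X y)) p = 0 := by
    rw [Filter.EventuallyEq.fderiv_eq (f := fun _ => (0 : ℝ)) hnull, fderiv_const_apply]
  rw [hzero, zero_apply,
    tensorContract_comm hsymm (fun α => fderiv ℝ (fun y => X y α) p v)] at hleibniz
  linarith

theorem tensorContract_fderiv_right_eq_zero {K : ι → ι → ℝ} {X : E → ι → ℝ} {p : E}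
    (hX : ∀ α, DifferentiableAt ℝ (fun y => X y α) p) (hsymm : ∀ α β, K α β = K β α)
    (hnull : ∀ᶠ y in 𝓝 p, tensorContract K (X y) (X y) = 0) (v : E) :
    tensorContract K (X p) (fun α => fderiv ℝ (fun y => X y α) p v) = 0 := by
  have hself := tensorContract_fderiv_self_of_null (H := fun _ => K)
    (fun _ _ => differentiableAt_const _) hX hsymm hnull v
  simpa [tensorContract] using hself

end TensorContract

section NullFrame

variable {p : Fin 4 → ℝ}

theorem rad_sq (p : Fin 4 → ℝ) : rad p ^ 2 = p 1 ^ 2 + p 2 ^ 2 + p 3 ^ 2 := by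
  unfold rad
  rw [Real.sq_sqrt (Finset.sum_nonneg fun i _ => sq_nonneg _), Fin.sum_univ_three]
  rfl

theorem differentiableAt_rad (hp : rad p ≠ 0) : DifferentiableAt ℝ rad p := by
  refine DifferentiableAt.sqrt (by fun_prop) fun hsum => hp ?_
  rw [rad, hsum, Real.sqrt_zero]

theorem eventually_rad_ne_zero (hp : rad p ≠ 0) : ∀ᶠ y in 𝓝 p, rad y ≠ 0 :=
  (differentiableAt_rad hp).continuousAt.eventually_ne hp

theorem differentiableAt_Lup (hp : rad p ≠ 0) (α : Fin 4) :
    DifferentiableAt ℝ (fun y => Lup y α) p := by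
  have hrad := differentiableAt_rad hp
  have hcoord (i : Fin 4) : DifferentiableAt ℝ (fun y : Fin 4 → ℝ => y i / rad y) p := by
    fun_prop (disch := assumption)
  fin_cases α
  exacts [differentiableAt_const 1, hcoord 1, hcoord 2, hcoord 3]

-- `mInv` is its own inverse, so it also gives the covariant components of the Minkowski metric.
theorem mInv_comm (α β : Fin 4) : mInv α β = mInv β α := by
  unfold mInv
  grind

theorem tensorContract_mInv_Lup (p X : Fin 4 → ℝ) :
    tensorContract mInv (Lup p) X =
      -X 0 + (p 1 * X 1 + p 2 * X 2 + p 3 * X 3) / rad p := by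
  simp only [tensorContract, mInv, Lup, Fin.sum_univ_four, Matrix.cons_val, Fin.reduceEq, if_true,
    if_false]
  ring

theorem tensorContract_mInv_Lup_self (hp : rad p ≠ 0) :
    tensorContract mInv (Lup p) (Lup p) = 0 := by
  rw [tensorContract_mInv_Lup]
  simp only [Lup, Matrix.cons_val]
  field_simp
  linarith [rad_sq p]

theorem tensorContract_mInv_Lup_Evec (p : Fin 4 → ℝ) (A : Fin 3) :
    tensorContract mInv (Lup p) (Evec A p) = 0 := by
  rw [tensorContract_mInv_Lup]
  fin_cases A <;> simp [Evec, field]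

theorem tensorContract_mInv_Lup_fderiv_Lup (hp : rad p ≠ 0) (v : Fin 4 → ℝ) :
    tensorContract mInv (Lup p) (fun α => fderiv ℝ (fun y => Lup y α) p v) = 0 :=
  tensorContract_fderiv_right_eq_zero (differentiableAt_Lup hp) mInv_comm
    ((eventually_rad_ne_zero hp).mono fun _ => tensorContract_mInv_Lup_self) v

end NullFrame

section RadialAngularTensor

variable {a b : (Fin 4 → ℝ) → ℝ} {p : Fin 4 → ℝ}

/-- The symmetric 2-tensor field `a (dt² - dr²) - b (dx² - dr²)`, where `dx²` is the Euclidean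
metric of space and `a`, `b` are functions on spacetime. The components are written as in `hS17`,
so that specializing `a` and `b` gives `hS17` definitionally. -/
noncomputable def radialAngularTensor (a b : (Fin 4 → ℝ) → ℝ) (p : Fin 4 → ℝ) :
    Fin 4 → Fin 4 → ℝ :=
  Fin.cons (Fin.cons (a p) (fun _ : Fin 3 => 0))
    (fun i : Fin 3 => Fin.cons 0 (fun j : Fin 3 =>
      -b p * (if i = j then 1 else 0)
        - (p i.succ * p j.succ / rad p ^ 2) * (a p - b p)))

theorem radialAngularTensor_comm (a b : (Fin 4 → ℝ) → ℝ) (p : Fin 4 → ℝ) (α β : Fin 4) :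
    radialAngularTensor a b p α β = radialAngularTensor a b p β α := by
  cases α using Fin.cases <;> cases β using Fin.cases <;>
    simp [radialAngularTensor, eq_comm, mul_comm]

theorem differentiableAt_radialAngularTensor (hp : rad p ≠ 0) (ha : DifferentiableAt ℝ a p)
    (hb : DifferentiableAt ℝ b p) (α β : Fin 4) :
    DifferentiableAt ℝ (fun y => radialAngularTensor a b y α β) p := by
  have hrad := differentiableAt_rad hp
  cases α using Fin.cases <;> cases β using Fin.cases <;>
    simp only [radialAngularTensor, Fin.cons_zero, Fin.cons_succ]
  · exact ha
  · exact differentiableAt_const 0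
  · exact differentiableAt_const 0
  · fun_prop (disch := simp [hp])

theorem tensorContract_radialAngularTensor_Lup (hp : rad p ≠ 0) (a b : (Fin 4 → ℝ) → ℝ)
    (X : Fin 4 → ℝ) :
    tensorContract (radialAngularTensor a b p) (Lup p) X =
      -a p * tensorContract mInv (Lup p) X := by
  rw [tensorContract_mInv_Lup]
  simp only [tensorContract, radialAngularTensor, Fin.sum_univ_succ (n := 3), Fin.sum_univ_three,
    Fin.cons_zero, Fin.cons_succ]
  simp only [Lup, Matrix.cons_val, Fin.reduceSucc, Fin.reduceEq, Fin.succ_zero_eq_one,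
    Fin.succ_one_eq_two, one_ne_zero, zero_ne_one, if_true, if_false]
  field_simp
  linear_combination ((a p - b p) * (p 1 * X 1 + p 2 * X 2 + p 3 * X 3)) * rad_sq p

theorem tensorContract_radialAngularTensor_Lup_self (hp : rad p ≠ 0) (a b : (Fin 4 → ℝ) → ℝ) :
    tensorContract (radialAngularTensor a b p) (Lup p) (Lup p) = 0 := by
  rw [tensorContract_radialAngularTensor_Lup hp, tensorContract_mInv_Lup_self hp, mul_zero]

theorem tensorContract_radialAngularTensor_Lup_Evec (hp : rad p ≠ 0) (a b : (Fin 4 → ℝ) → ℝ)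
    (A : Fin 3) : tensorContract (radialAngularTensor a b p) (Lup p) (Evec A p) = 0 := by
  rw [tensorContract_radialAngularTensor_Lup hp, tensorContract_mInv_Lup_Evec, mul_zero]

theorem tensorContract_fderiv_radialAngularTensor_Lup_self (hp : rad p ≠ 0)
    (ha : DifferentiableAt ℝ a p) (hb : DifferentiableAt ℝ b p) (v : Fin 4 → ℝ) :
    tensorContract (fun α β => fderiv ℝ (fun y => radialAngularTensor a b y α β) p v)
      (Lup p) (Lup p) = 0 := by
  have hnull : ∀ᶠ y in 𝓝 p, tensorContract (radialAngularTensor a b y) (Lup y) (Lup y) = 0 :=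
    (eventually_rad_ne_zero hp).mono fun _ hy =>
      tensorContract_radialAngularTensor_Lup_self hy a b
  rw [tensorContract_fderiv_self_of_null (differentiableAt_radialAngularTensor hp ha hb)
      (differentiableAt_Lup hp) (radialAngularTensor_comm a b p) hnull,
    tensorContract_radialAngularTensor_Lup hp, tensorContract_mInv_Lup_fderiv_Lup hp]
  simp only [mul_zero]

end RadialAngularTensor

section MassMetric

variable {p : Fin 4 → ℝ}

theorem hS17_eq_radialAngularTensor (M : ℝ) :
    hS17 M = radialAngularTensor (fun y => 2 * M / rad y)
      (fun y => 4 * M * Real.log (rad y - 2 * M) / rad y) :=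
  rfl

theorem differentiableAt_two_mul_div_rad (M : ℝ) (hp : rad p ≠ 0) :
    DifferentiableAt ℝ (fun y => 2 * M / rad y) p := by
  have hrad := differentiableAt_rad hp
  fun_prop (disch := assumption)

theorem differentiableAt_log_rad_div_rad {M : ℝ} (hp : rad p ≠ 0) (hM : rad p ≠ 2 * M) :
    DifferentiableAt ℝ (fun y => 4 * M * Real.log (rad y - 2 * M) / rad y) p := by
  have hrad := differentiableAt_rad hp
  have hne : rad p - 2 * M ≠ 0 := sub_ne_zero.mpr hM
  fun_prop (disch := assumption)

end MassMetric

theorem stmt17_general {a b : (Fin 4 → ℝ) → ℝ} {p : Fin 4 → ℝ} (h0 : 0 < rad p)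
    (ha : DifferentiableAt ℝ a p) (hb : DifferentiableAt ℝ b p) :
    ((∑ α : Fin 4, ∑ β : Fin 4, radialAngularTensor a b p α β * Lup p α * Lup p β) = 0)
    ∧ (∀ A : Fin 3,
        (∑ α : Fin 4, ∑ β : Fin 4, radialAngularTensor a b p α β * Lup p α * Evec A p β) = 0)
    ∧ (∀ v : Fin 4 → ℝ,
        (∑ α : Fin 4, ∑ β : Fin 4,
          fderiv ℝ (fun y => radialAngularTensor a b y α β) p v * Lup p α * Lup p β) = 0) :=
  ⟨tensorContract_radialAngularTensor_Lup_self h0.ne' a b,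
    tensorContract_radialAngularTensor_Lup_Evec h0.ne' a b,
    tensorContract_fderiv_radialAngularTensor_Lup_self h0.ne' ha hb⟩

/-- Vanishing of the good null components of the approximate mass
metric on `{|x| > 0} ∩ {|x| > 2M}`: (i) `h̃_{LL} = 0`; (ii) `h̃_{LE^A} = 0`;
(iii) `(Γh̃)_{LL} = 0` for each of the 11 Minkowskian commuting vector fields `Γ`. -/
theorem stmt17 (M : ℝ) (p : Fin 4 → ℝ) (h0 : 0 < rad p) (hM : 2 * M < rad p) :
    ((∑ α : Fin 4, ∑ β : Fin 4, hS17 M p α β * Lup p α * Lup p β) = 0)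
    ∧ (∀ A : Fin 3,
        (∑ α : Fin 4, ∑ β : Fin 4, hS17 M p α β * Lup p α * Evec A p β) = 0)
    ∧ (∀ k : Fin 11,
        (∑ α : Fin 4, ∑ β : Fin 4,
          fderiv ℝ (fun y => hS17 M y α β) p (minkVF k p) * Lup p α * Lup p β) = 0) := by
  rw [hS17_eq_radialAngularTensor]
  have hvanish := stmt17_general h0 (differentiableAt_two_mul_div_rad M h0.ne')
    (differentiableAt_log_rad_div_rad h0.ne' hM.ne')
  exact ⟨hvanish.1, hvanish.2.1, fun k => hvanish.2.2 (minkVF k p)⟩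
end

section
/- (Sharp-decay integral bounds for the inhomogeneous term.) Fix γ ∈ (0,1/8], let w be the associated weight, and set ϖ(q) := (1+|q|)^{1/2−γ/4} w(q)^{1/2} and D_τ := {x ∈ ℝ³ : τ/2 ≤ |x| ≤ 2τ}. Then: (a) for every δ₀ ∈ (0, γ/4) there is a constant C = C(γ,δ₀) with ∫_0^∞ (1+τ) · sup_{x ∈ D_τ} [ ϖ(|x|−τ) log²(2+τ+|x|) / ((1+τ+|x|)^{2+γ/2} (1+||x|−τ|)^{1/2−γ/2−δ₀} w(|x|−τ)^{1/2}) ] dτ ≤ C; and (b) there is a constant C = C(γ) such that for all t ≥ 0, ∫_0^t (1+τ) · sup_{x ∈ D_τ} [ ϖ(|x|−τ) log²(2+τ+|x|) / ((1+τ+|x|)² (1+||x|−τ|) w(|x|−τ)^{γ/(1+2γ)}) ] dτ ≤ C log³(2+t). -/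
open MeasureTheory

/-- The weight `ϖ(q) = (1+|q|)^{1/2−γ/4} w(q)^{1/2}`. -/
noncomputable def piw (γ q : ℝ) : ℝ :=
  (1 + |q|) ^ ((1 : ℝ) / 2 - γ / 4) * (wgt γ q) ^ ((1 : ℝ) / 2)

/-- The annulus `D_τ = {x ∈ ℝ³ : τ/2 ≤ |x| ≤ 2τ}`. -/
def Dball (τ : ℝ) : Set (Fin 3 → ℝ) := {x | τ / 2 ≤ rad3 x ∧ rad3 x ≤ 2 * τ}

/-!
Write `Q = 1 + |q|` and `S = 1 + τ + r`, so that `1 ≤ Q ≤ S` for every `r ≥ 0`.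

In (a) the powers of `w` cancel and leave `Q ^ (γ/4 + δ₀) log² (1 + S) / S ^ (2 + γ/2)`. Since
`δ₀ < γ/4`, the power of `Q` costs less than the gain `S ^ (-γ/2)`, and what remains of that gain
absorbs the logarithms and still makes the `τ`-integral converge.

In (b) the exponent `γ / (1 + 2γ)` is the one for which `w ^ (1/2 - γ/(1 + 2γ)) ≲ Q ^ (1/2)`,
because `w ≲ Q ^ (1 + 2γ)`. Hence all powers of `Q` and `w` together are bounded and
`log² (1 + S) / S ^ 2` is left. As `log (1 + S) / S` decreases in `S`, its supremum is attained at
`r = 0`; two logarithms come from this bound and the third from `∫ dτ / (1 + τ)`.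
-/

/-- The bracket of part (a), as a function of time `τ` and radius `r`. -/
noncomputable def decayKernel (γ δ τ r : ℝ) : ℝ :=
  piw γ (r - τ) * (Real.log (2 + τ + r)) ^ 2 /
    ((1 + τ + r) ^ (2 + γ / 2) * (1 + |r - τ|) ^ ((1 : ℝ) / 2 - γ / 2 - δ)
      * (wgt γ (r - τ)) ^ ((1 : ℝ) / 2))

/-- The bracket of part (b), as a function of time `τ` and radius `r`; its decay in `τ` is
critical: multiplied by `1 + τ`, it has a logarithmically divergent `τ`-integral. -/
noncomputable def criticalKernel (γ τ r : ℝ) : ℝ :=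
  piw γ (r - τ) * (Real.log (2 + τ + r)) ^ 2 /
    ((1 + τ + r) ^ 2 * (1 + |r - τ|) * (wgt γ (r - τ)) ^ (γ / (1 + 2 * γ)))

section Weights

variable {γ : ℝ} (q : ℝ)

theorem one_le_one_add_abs : 1 ≤ 1 + |q| :=
  le_add_of_nonneg_right (abs_nonneg q)

theorem wgt_pos : 0 < wgt γ q := by
  unfold wgt
  split_ifs <;> positivity

theorem wgt_le_two_mul_rpow (hγ : 0 ≤ γ) : wgt γ q ≤ 2 * (1 + |q|) ^ (1 + 2 * γ) := by
  have one_le_pow : 1 ≤ (1 + |q|) ^ (1 + 2 * γ) :=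
    Real.one_le_rpow (one_le_one_add_abs q) (by linarith)
  have pow_le_one : (1 + |q|) ^ (-(γ / 2)) ≤ 1 :=
    Real.rpow_le_one_of_one_le_of_nonpos (one_le_one_add_abs q) (by linarith)
  unfold wgt
  split_ifs <;> linarith

theorem wgt_rpow_le_two_mul_rpow (hγ : 0 ≤ γ) {p : ℝ} (hp₀ : 0 ≤ p) (hp₁ : p ≤ 1) :
    wgt γ q ^ p ≤ 2 * (1 + |q|) ^ ((1 + 2 * γ) * p) :=
  calc wgt γ q ^ p
      ≤ (2 * (1 + |q|) ^ (1 + 2 * γ)) ^ p :=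
        Real.rpow_le_rpow (wgt_pos q).le (wgt_le_two_mul_rpow q hγ) hp₀
    _ = 2 ^ p * (1 + |q|) ^ ((1 + 2 * γ) * p) := by
        rw [Real.mul_rpow two_pos.le (by positivity), ← Real.rpow_mul (by positivity)]
    _ ≤ 2 * (1 + |q|) ^ ((1 + 2 * γ) * p) := by
        gcongr
        exact Real.rpow_le_self_of_one_le one_le_two hp₁

theorem piw_div_rpow_mul_wgt_rpow_half (a : ℝ) :
    piw γ q / ((1 + |q|) ^ a * wgt γ q ^ ((1 : ℝ) / 2)) = (1 + |q|) ^ (1 / 2 - γ / 4 - a) := by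
  rw [piw, mul_div_mul_right _ _ (Real.rpow_pos_of_pos (wgt_pos q) _).ne',
    ← Real.rpow_sub (by positivity)]

theorem piw_div_mul_wgt_rpow_le_two (hγ : 0 ≤ γ) :
    piw γ q / ((1 + |q|) * wgt γ q ^ (γ / (1 + 2 * γ))) ≤ 2 := by
  have hQ : 0 < 1 + |q| := by positivity
  have exponent : (1 : ℝ) / 2 - γ / (1 + 2 * γ) = 1 / (2 * (1 + 2 * γ)) := by
    field_simp
    ring
  have wgt_le : wgt γ q ^ ((1 : ℝ) / 2 - γ / (1 + 2 * γ)) ≤ 2 * (1 + |q|) ^ ((1 : ℝ) / 2) := by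
    rw [exponent]
    convert wgt_rpow_le_two_mul_rpow q hγ (p := 1 / (2 * (1 + 2 * γ))) (by positivity)
      ((div_le_one (by positivity)).2 (by linarith)) using 3
    field_simp
  calc piw γ q / ((1 + |q|) * wgt γ q ^ (γ / (1 + 2 * γ)))
      = (1 + |q|) ^ ((1 : ℝ) / 2 - γ / 4 - 1) * wgt γ q ^ ((1 : ℝ) / 2 - γ / (1 + 2 * γ)) := by
        rw [piw, mul_div_mul_comm, Real.rpow_sub (wgt_pos q), Real.rpow_sub_one hQ.ne']
    _ ≤ (1 + |q|) ^ ((1 : ℝ) / 2 - γ / 4 - 1) * (2 * (1 + |q|) ^ ((1 : ℝ) / 2)) := by gcongr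
    _ = 2 * (1 + |q|) ^ (-(γ / 4)) := by
        rw [mul_left_comm, ← Real.rpow_add hQ]
        ring_nf
    _ ≤ 2 := mul_le_of_le_one_right two_pos.le <|
        Real.rpow_le_one_of_one_le_of_nonpos (one_le_one_add_abs q) (by linarith)

end Weights

section Logarithm

theorem log_one_add_sq_le_rpow {ε x : ℝ} (hε : 0 < ε) (hx : 1 ≤ x) :
    Real.log (1 + x) ^ 2 ≤ (2 ^ ε / ε) ^ 2 * x ^ (2 * ε) := by
  have hx₀ : 0 ≤ x := zero_le_one.trans hx
  have log_le : Real.log (1 + x) ≤ 2 ^ ε / ε * x ^ ε :=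
    calc Real.log (1 + x)
        ≤ (1 + x) ^ ε / ε := Real.log_le_rpow_div (by positivity) hε
      _ ≤ (2 * x) ^ ε / ε := by
          gcongr
          linarith
      _ = 2 ^ ε / ε * x ^ ε := by
          rw [Real.mul_rpow two_pos.le hx₀]
          ring
  calc Real.log (1 + x) ^ 2
      ≤ (2 ^ ε / ε * x ^ ε) ^ 2 :=
        pow_le_pow_left₀ (Real.log_nonneg (by linarith)) log_le 2
    _ = (2 ^ ε / ε) ^ 2 * x ^ (2 * ε) := by
        rw [mul_pow, mul_comm 2 ε, Real.rpow_mul hx₀, Real.rpow_two]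

theorem antitoneOn_log_one_add_div :
    AntitoneOn (fun x : ℝ => Real.log (1 + x) / x) (Set.Ioi 0) := by
  intro a (ha : 0 < a) b (hb : 0 < b) hab
  have bernoulli : 1 + b ≤ (1 + a) ^ (b / a) := by
    simpa [ha.ne'] using
      one_add_mul_self_le_rpow_one_add (by linarith : -1 ≤ a) ((one_le_div ha).2 hab)
  have log_le : Real.log (1 + b) ≤ b / a * Real.log (1 + a) := by
    rw [← Real.log_rpow (by positivity)]
    exact Real.log_le_log (by positivity) bernoulli
  calc Real.log (1 + b) / b
      ≤ b / a * Real.log (1 + a) / b := by gcongr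
    _ = Real.log (1 + a) / a := by field_simp

end Logarithm

section Kernels

variable {γ δ ε τ r t : ℝ}

theorem one_add_abs_sub_le (hτ : 0 ≤ τ) (hr : 0 ≤ r) : 1 + |r - τ| ≤ 1 + τ + r := by
  rw [add_assoc, add_le_add_iff_left, abs_le]
  constructor <;> linarith

theorem decayKernel_le (hε : 0 < ε) (hγ : 8 * ε ≤ γ) (hδ : 4 * ε ≤ γ / 4 - δ)
    (hτ : 0 ≤ τ) (hr : 0 ≤ r) :
    decayKernel γ δ τ r ≤ (2 ^ ε / ε) ^ 2 * (1 + τ) ^ (-2 - 2 * ε) := by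
  have hS : 0 < 1 + τ + r := by positivity
  have weight_le : (1 + |r - τ|) ^ (1 / 2 - γ / 4 - (1 / 2 - γ / 2 - δ)) ≤
      (1 + τ + r) ^ (γ / 2 - 4 * ε) :=
    calc (1 + |r - τ|) ^ (1 / 2 - γ / 4 - (1 / 2 - γ / 2 - δ))
        ≤ (1 + |r - τ|) ^ (γ / 2 - 4 * ε) :=
          Real.rpow_le_rpow_of_exponent_le (one_le_one_add_abs _) (by linarith)
      _ ≤ (1 + τ + r) ^ (γ / 2 - 4 * ε) :=
          Real.rpow_le_rpow (by positivity) (one_add_abs_sub_le hτ hr) (by linarith)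
  have log_le : Real.log (2 + τ + r) ^ 2 ≤ (2 ^ ε / ε) ^ 2 * (1 + τ + r) ^ (2 * ε) := by
    convert log_one_add_sq_le_rpow hε (by linarith : 1 ≤ 1 + τ + r) using 3
    ring
  have powers : (1 + τ + r) ^ (γ / 2 - 4 * ε) * (1 + τ + r) ^ (2 * ε) / (1 + τ + r) ^ (2 + γ / 2) =
      (1 + τ + r) ^ (-2 - 2 * ε) := by
    rw [← Real.rpow_add hS, ← Real.rpow_sub hS]
    congr 1
    ring
  calc decayKernel γ δ τ r
      = (1 + |r - τ|) ^ (1 / 2 - γ / 4 - (1 / 2 - γ / 2 - δ)) *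
          (Real.log (2 + τ + r) ^ 2 / (1 + τ + r) ^ (2 + γ / 2)) := by
        rw [decayKernel, ← piw_div_rpow_mul_wgt_rpow_half, ← mul_div_mul_comm]
        ring_nf
    _ ≤ (1 + τ + r) ^ (γ / 2 - 4 * ε) *
          ((2 ^ ε / ε) ^ 2 * (1 + τ + r) ^ (2 * ε) / (1 + τ + r) ^ (2 + γ / 2)) := by gcongr
    _ = (2 ^ ε / ε) ^ 2 * (1 + τ + r) ^ (-2 - 2 * ε) := by
        rw [← powers]
        ring
    _ ≤ (2 ^ ε / ε) ^ 2 * (1 + τ) ^ (-2 - 2 * ε) := by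
        gcongr ?_ * ?_
        exact Real.rpow_le_rpow_of_nonpos (by positivity) (by linarith) (by linarith)

theorem criticalKernel_le (hγ : 0 ≤ γ) (hτ : 0 ≤ τ) (hr : 0 ≤ r) (hτt : τ ≤ t) :
    criticalKernel γ τ r ≤ 2 * (Real.log (2 + t) / (1 + τ)) ^ 2 := by
  have log_div_le : Real.log (2 + τ + r) / (1 + τ + r) ≤ Real.log (2 + t) / (1 + τ) :=
    calc Real.log (2 + τ + r) / (1 + τ + r)
        = Real.log (1 + (1 + τ + r)) / (1 + τ + r) := by ring_nf
      _ ≤ Real.log (1 + (1 + τ)) / (1 + τ) :=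
          antitoneOn_log_one_add_div (by positivity : 0 < 1 + τ)
            (by positivity : 0 < 1 + τ + r) (by linarith)
      _ ≤ Real.log (2 + t) / (1 + τ) := by
          gcongr ?_ / _
          exact Real.log_le_log (by positivity) (by linarith)
  have log_div_nonneg : 0 ≤ Real.log (2 + τ + r) / (1 + τ + r) :=
    div_nonneg (Real.log_nonneg (by linarith)) (by positivity)
  calc criticalKernel γ τ r
      = piw γ (r - τ) / ((1 + |r - τ|) * wgt γ (r - τ) ^ (γ / (1 + 2 * γ))) *
          (Real.log (2 + τ + r) / (1 + τ + r)) ^ 2 := by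
        rw [criticalKernel, div_pow, ← mul_div_mul_comm]
        ring_nf
    _ ≤ 2 * (Real.log (2 + t) / (1 + τ)) ^ 2 := by
        gcongr
        exact piw_div_mul_wgt_rpow_le_two _ hγ

end Kernels

section Integrals

theorem setLIntegral_ofReal_mul_biSup_le {α E : Type*} [MeasurableSpace α] {μ : Measure α}
    {s : Set α} (hs : MeasurableSet s) {c B : α → ℝ} {f : α → E → ℝ} {D : α → Set E}
    (hc : ∀ a ∈ s, 0 ≤ c a) (hB : ∀ a ∈ s, 0 ≤ B a) (hf : ∀ a ∈ s, ∀ x ∈ D a, f a x ≤ B a) :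
    ∫⁻ a in s, ENNReal.ofReal (c a * ⨆ x ∈ D a, f a x) ∂μ ≤
      ∫⁻ a in s, ENNReal.ofReal (c a * B a) ∂μ := by
  refine setLIntegral_mono' hs fun a ha => ENNReal.ofReal_le_ofReal ?_
  exact mul_le_mul_of_nonneg_left
    (Real.iSup_le (fun x => Real.iSup_le (hf a ha x) (hB a ha)) (hB a ha)) (hc a ha)

theorem lintegral_Ioi_one_add_rpow {a : ℝ} (ha : 0 < a) :
    ∫⁻ τ in Set.Ioi (0 : ℝ), ENNReal.ofReal ((1 + τ) ^ (-1 - a)) = ENNReal.ofReal a⁻¹ := by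
  have shift := (measurePreserving_add_left volume (1 : ℝ)).setLIntegral_comp_preimage
    (measurableSet_Ioi (a := 1)) (f := fun x => ENNReal.ofReal (x ^ (-1 - a))) (by fun_prop)
  rw [Set.preimage_const_add_Ioi, sub_self] at shift
  rw [shift, ← ofReal_integral_eq_lintegral_ofReal
    (integrableOn_Ioi_rpow_of_lt (by linarith) one_pos),
    integral_Ioi_rpow_of_lt (by linarith) one_pos, Real.one_rpow,
    show -1 - a + 1 = -a by ring, neg_div_neg_eq, one_div]
  filter_upwards [ae_restrict_mem measurableSet_Ioi] with x (hx : 1 < x)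
  exact Real.rpow_nonneg (by linarith) _

theorem lintegral_Icc_one_add_inv {t : ℝ} (ht : 0 ≤ t) :
    ∫⁻ τ in Set.Icc (0 : ℝ) t, ENNReal.ofReal (1 + τ)⁻¹ = ENNReal.ofReal (Real.log (1 + t)) := by
  have integrable : IntegrableOn (fun τ : ℝ => (1 + τ)⁻¹) (Set.Icc 0 t) := by
    refine ContinuousOn.integrableOn_Icc (ContinuousOn.inv₀ (by fun_prop) fun τ hτ => ?_)
    linarith [hτ.1]
  rw [← ofReal_integral_eq_lintegral_ofReal integrable, integral_Icc_eq_integral_Ioc,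
    ← intervalIntegral.integral_of_le ht,
    intervalIntegral.integral_comp_add_left (fun x => x⁻¹),
    integral_inv_of_pos (by linarith) (by linarith), add_zero, div_one]
  filter_upwards [ae_restrict_mem measurableSet_Icc] with τ hτ
  exact inv_nonneg.2 (by linarith [hτ.1])

variable {E : Type*} {ρ : E → ℝ} {γ δ ε t : ℝ}

theorem lintegral_biSup_decayKernel_le (hρ : ∀ x, 0 ≤ ρ x) (D : ℝ → Set E) (hε : 0 < ε)
    (hγ : 8 * ε ≤ γ) (hδ : 4 * ε ≤ γ / 4 - δ) :
    ∫⁻ τ in Set.Ioi (0 : ℝ),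
        ENNReal.ofReal ((1 + τ) * ⨆ x ∈ D τ, decayKernel γ δ τ (ρ x)) ≤
      ENNReal.ofReal ((2 ^ ε / ε) ^ 2 * (2 * ε)⁻¹) := by
  have hK : 0 ≤ (2 ^ ε / ε) ^ 2 := by positivity
  calc ∫⁻ τ in Set.Ioi (0 : ℝ),
        ENNReal.ofReal ((1 + τ) * ⨆ x ∈ D τ, decayKernel γ δ τ (ρ x))
      ≤ ∫⁻ τ in Set.Ioi (0 : ℝ),
          ENNReal.ofReal ((1 + τ) * ((2 ^ ε / ε) ^ 2 * (1 + τ) ^ (-2 - 2 * ε))) := by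
        refine setLIntegral_ofReal_mul_biSup_le measurableSet_Ioi ?_ ?_ ?_ <;>
          intro τ (hτ : 0 < τ)
        · positivity
        · positivity
        · exact fun x _ => decayKernel_le hε hγ hδ hτ.le (hρ x)
    _ = ∫⁻ τ in Set.Ioi (0 : ℝ),
          ENNReal.ofReal ((2 ^ ε / ε) ^ 2) * ENNReal.ofReal ((1 + τ) ^ (-1 - 2 * ε)) := by
        refine setLIntegral_congr_fun measurableSet_Ioi fun τ (hτ : 0 < τ) => ?_
        rw [← ENNReal.ofReal_mul hK, mul_left_comm, ← Real.rpow_one_add' (by positivity)]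
        · ring_nf
        · linarith
    _ = ENNReal.ofReal ((2 ^ ε / ε) ^ 2 * (2 * ε)⁻¹) := by
        rw [lintegral_const_mul' _ _ ENNReal.ofReal_ne_top,
          lintegral_Ioi_one_add_rpow (by positivity), ENNReal.ofReal_mul hK]

theorem lintegral_biSup_criticalKernel_le (hρ : ∀ x, 0 ≤ ρ x) (D : ℝ → Set E) (hγ : 0 ≤ γ)
    (ht : 0 ≤ t) :
    ∫⁻ τ in Set.Icc (0 : ℝ) t,
        ENNReal.ofReal ((1 + τ) * ⨆ x ∈ D τ, criticalKernel γ τ (ρ x)) ≤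
      ENNReal.ofReal (2 * Real.log (2 + t) ^ 3) := by
  have hM : 0 ≤ 2 * Real.log (2 + t) ^ 2 := by positivity
  calc ∫⁻ τ in Set.Icc (0 : ℝ) t,
        ENNReal.ofReal ((1 + τ) * ⨆ x ∈ D τ, criticalKernel γ τ (ρ x))
      ≤ ∫⁻ τ in Set.Icc (0 : ℝ) t,
          ENNReal.ofReal ((1 + τ) * (2 * (Real.log (2 + t) / (1 + τ)) ^ 2)) := by
        refine setLIntegral_ofReal_mul_biSup_le measurableSet_Icc ?_ ?_ ?_ <;>
          rintro τ ⟨hτ, hτt⟩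
        · positivity
        · positivity
        · exact fun x _ => criticalKernel_le hγ hτ (hρ x) hτt
    _ = ∫⁻ τ in Set.Icc (0 : ℝ) t,
          ENNReal.ofReal (2 * Real.log (2 + t) ^ 2) * ENNReal.ofReal (1 + τ)⁻¹ := by
        refine setLIntegral_congr_fun measurableSet_Icc fun τ ⟨hτ, _⟩ => ?_
        rw [← ENNReal.ofReal_mul hM]
        congr 1
        field_simp
    _ = ENNReal.ofReal (2 * Real.log (2 + t) ^ 2 * Real.log (1 + t)) := by
        rw [lintegral_const_mul' _ _ ENNReal.ofReal_ne_top, lintegral_Icc_one_add_inv ht,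
          ENNReal.ofReal_mul hM]
    _ ≤ ENNReal.ofReal (2 * Real.log (2 + t) ^ 2 * Real.log (2 + t)) := by
        gcongr
        norm_num
    _ = ENNReal.ofReal (2 * Real.log (2 + t) ^ 3) := by ring_nf

end Integrals

theorem stmt18_general {E : Type*} {ρ : E → ℝ} (hρ : ∀ x, 0 ≤ ρ x) (D : ℝ → Set E) {γ : ℝ}
    (hγ : 0 < γ) :
    (∀ δ < γ / 4, ∃ C > (0 : ℝ),
      ∫⁻ τ in Set.Ioi (0 : ℝ),
          ENNReal.ofReal ((1 + τ) * ⨆ x ∈ D τ, decayKernel γ δ τ (ρ x)) ≤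
        ENNReal.ofReal C) ∧
    ∃ C > (0 : ℝ), ∀ t : ℝ, 0 ≤ t →
      ∫⁻ τ in Set.Icc (0 : ℝ) t,
          ENNReal.ofReal ((1 + τ) * ⨆ x ∈ D τ, criticalKernel γ τ (ρ x)) ≤
        ENNReal.ofReal (C * Real.log (2 + t) ^ 3) := by
  refine ⟨fun δ hδ => ?_, 2, two_pos, fun t => lintegral_biSup_criticalKernel_le hρ D hγ.le⟩
  obtain ⟨ε, hε, hεγδ⟩ : ∃ ε > 0, ε < min (γ / 8) ((γ / 4 - δ) / 4) :=
    exists_between (lt_min (by linarith) (by linarith))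
  obtain ⟨hεγ, hεδ⟩ := lt_min_iff.1 hεγδ
  exact ⟨_, by positivity,
    lintegral_biSup_decayKernel_le hρ D hε (by linarith) (by linarith)⟩

/-- Sharp-decay integral bounds for the inhomogeneous term: (a) for
every `δ₀ ∈ (0, γ/4)` the integral over `τ ∈ (0,∞)` of
`(1+τ)·sup_{x∈D_τ}[ϖ log²(2+s)/((1+s)^{2+γ/2}(1+|q|)^{1/2−γ/2−δ₀} w^{1/2})]` is finite;
(b) the integral over `τ ∈ [0,t]` of
`(1+τ)·sup_{x∈D_τ}[ϖ log²(2+s)/((1+s)²(1+|q|) w^{γ/(1+2γ)})]` is `≲ log³(2+t)`. -/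
theorem stmt18 (γ : ℝ) (hγ0 : 0 < γ) (hγ1 : γ ≤ 1 / 8) :
    (∀ δ₀ : ℝ, 0 < δ₀ → δ₀ < γ / 4 →
      ∃ C > (0 : ℝ),
        (∫⁻ τ in Set.Ioi (0 : ℝ),
          ENNReal.ofReal ((1 + τ) *
            (⨆ x ∈ Dball τ,
              piw γ (rad3 x - τ) * (Real.log (2 + τ + rad3 x)) ^ 2 /
                ((1 + τ + rad3 x) ^ (2 + γ / 2)
                  * (1 + |rad3 x - τ|) ^ ((1 : ℝ) / 2 - γ / 2 - δ₀)
                  * (wgt γ (rad3 x - τ)) ^ ((1 : ℝ) / 2)))))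
          ≤ ENNReal.ofReal C)
    ∧ (∃ C > (0 : ℝ), ∀ t : ℝ, 0 ≤ t →
        (∫⁻ τ in Set.Icc (0 : ℝ) t,
          ENNReal.ofReal ((1 + τ) *
            (⨆ x ∈ Dball τ,
              piw γ (rad3 x - τ) * (Real.log (2 + τ + rad3 x)) ^ 2 /
                ((1 + τ + rad3 x) ^ 2 * (1 + |rad3 x - τ|)
                  * (wgt γ (rad3 x - τ)) ^ (γ / (1 + 2 * γ))))))
          ≤ ENNReal.ofReal (C * (Real.log (2 + t)) ^ 3)) := by
  have general := stmt18_general (ρ := rad3) (fun _ => Real.sqrt_nonneg _) Dball hγ0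
  exact ⟨fun δ₀ _ hδ₀ => general.1 δ₀ hδ₀, general.2⟩
end

section
/- (L¹-in-time bound for the potential-type term via the Hardy inequality.) Fix γ ∈ (0,1/8] and δ₀ ∈ (0, γ/16]. There exists a constant C = C(γ,δ₀) such that for all 0 < T ≤ t and every function G on [T,t]×ℝ³ that is C¹ in x with G(τ,·) compactly supported for each τ and with (τ,x) ↦ G and ∇_xG continuous: ∫_T^t ( ∫_{ℝ³} log²(2+τ+|x|) G(τ,x)² w(|x|−τ) / ((1+τ+|x|)^{4−4δ₀} (1+||x|−τ|)^{2γ+4δ₀}) dx )^{1/2} dτ ≤ C T^{−γ/2} · sup_{τ ∈ [T,t]} ( ∫_{ℝ³} |∇_xG(τ,x)|² w(|x|−τ) dx )^{1/2}. -/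
open MeasureTheory

/-! Let `k` be a nonnegative function with derivative `k' > 0` and `k ^ 2 ≤ k' * w`. Integrating
the derivative of `r ^ n * k r * u r ^ 2` over the half-line gives
`∫ r ^ n * k' * u ^ 2 ≤ -2 * ∫ r ^ n * k * u * deriv u`, and completing the square bounds the
left-hand side by `4 * ∫ r ^ n * w * (deriv u) ^ 2`. Applied along every ray from the origin, in
polar coordinates, this is a weighted Hardy inequality on any nontrivial finite-dimensional normed
space, and it is unaffected by the shift `r ↦ r - τ`.

For the weight `w` of the theorem there is such a `k` with `k' q` comparable to
`w q / (1 + |q|) ^ 2`. Since `1 + |r - τ| ≤ 1 + τ + r`, trading powers of `1 + |r - τ|` for powers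
of `1 + τ + r` and absorbing the logarithm into `(1 + τ + r) ^ γ` bounds the integrand of the
potential-type term, up to a constant, by `τ ^ (-2 - γ) * w / (1 + |r - τ|) ^ 2 * G ^ 2`. The square
root leaves `τ ^ (-1 - γ / 2)`, whose integral over `[T, ∞)` is a multiple of `T ^ (-γ / 2)`.
-/

open Set Module

section RadialMultiplier

/-- A nonnegative increasing multiplier `k`, with derivative `k'`, such that integrating the
derivative of `r ^ n * k r * u r ^ 2` gives the Hardy inequality with weight `k'` on `u ^ 2` and
weight `w` on `(deriv u) ^ 2`. -/
structure IsHardyMultiplier (k k' w : ℝ → ℝ) : Prop where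
  hasDerivAt : ∀ r, HasDerivAt k (k' r) r
  continuous_deriv : Continuous k'
  continuous_weight : Continuous w
  nonneg : ∀ r, 0 ≤ k r
  deriv_pos : ∀ r, 0 < k' r
  sq_le : ∀ r, k r ^ 2 ≤ k' r * w r

namespace IsHardyMultiplier

variable {k k' w : ℝ → ℝ}

theorem contDiff (h : IsHardyMultiplier k k' w) : ContDiff ℝ 1 k :=
  contDiff_one_iff_deriv.2 ⟨fun r => (h.hasDerivAt r).differentiableAt,
    (funext fun r => (h.hasDerivAt r).deriv : deriv k = k') ▸ h.continuous_deriv⟩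

theorem comp_sub_const (h : IsHardyMultiplier k k' w) (a : ℝ) :
    IsHardyMultiplier (fun r => k (r - a)) (fun r => k' (r - a)) (fun r => w (r - a)) where
  hasDerivAt r := (h.hasDerivAt (r - a)).comp_sub_const r a
  continuous_deriv := h.continuous_deriv.comp (continuous_sub_right a)
  continuous_weight := h.continuous_weight.comp (continuous_sub_right a)
  nonneg r := h.nonneg (r - a)
  deriv_pos r := h.deriv_pos (r - a)
  sq_le r := h.sq_le (r - a)

theorem weight_nonneg (h : IsHardyMultiplier k k' w) (r : ℝ) : 0 ≤ w r :=
  nonneg_of_mul_nonneg_right ((sq_nonneg _).trans (h.sq_le r)) (h.deriv_pos r)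

theorem deriv_mul_sq_le (h : IsHardyMultiplier k k' w) (r u v : ℝ) :
    k' r * u ^ 2 ≤ 4 * (w r * v ^ 2) + 2 * (k' r * u ^ 2 + 2 * k r * u * v) := by
  have hsq : k r ^ 2 * v ^ 2 ≤ k' r * w r * v ^ 2 := by gcongr; exact h.sq_le r
  refine le_of_mul_le_mul_left ?_ (h.deriv_pos r)
  nlinarith only [hsq, sq_nonneg (k' r * u + 2 * (k r * v))]

theorem deriv_pow_mul_mul_sq (h : IsHardyMultiplier k k' w) {u : ℝ → ℝ}
    (hu : Differentiable ℝ u) (n : ℕ) (r : ℝ) :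
    deriv (fun r => r ^ n * k r * u r ^ 2) r =
      n * r ^ (n - 1) * k r * u r ^ 2
        + r ^ n * (k' r * u r ^ 2 + 2 * k r * u r * deriv u r) := by
  have hderiv := ((hasDerivAt_pow n r).mul (h.hasDerivAt r)).mul ((hu r).hasDerivAt.pow 2)
  refine (HasDerivAt.deriv hderiv).trans ?_
  simp only [Pi.mul_apply, Pi.pow_apply]
  push_cast
  ring

theorem integral_Ioi_le (h : IsHardyMultiplier k k' w) {u : ℝ → ℝ} (hu : ContDiff ℝ 1 u)
    (hc : HasCompactSupport u) (n : ℕ) :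
    ∫ r in Ioi 0, r ^ n * (k' r * u r ^ 2) ≤ ∫ r in Ioi 0, r ^ n * (4 * (w r * deriv u r ^ 2)) := by
  have hu2 : HasCompactSupport fun r => u r ^ 2 := hc.comp_left (g := (· ^ 2)) (by norm_num)
  have hdu2 : HasCompactSupport fun r => deriv u r ^ 2 :=
    hc.deriv.comp_left (g := (· ^ 2)) (by norm_num)
  set ψ : ℝ → ℝ := fun r => r ^ n * k r * u r ^ 2
  have hψ1 : ContDiff ℝ 1 ψ := ((contDiff_id.pow n).mul h.contDiff).mul (hu.pow 2)
  have hψc : HasCompactSupport ψ := hu2.mul_left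
  have hint_deriv : IntegrableOn (deriv ψ) (Ioi 0) :=
    ((hψ1.continuous_deriv le_rfl).integrable_of_hasCompactSupport hψc.deriv).integrableOn
  have hint_left : IntegrableOn (fun r => r ^ n * (k' r * u r ^ 2)) (Ioi 0) :=
    (((continuous_pow n).mul (h.continuous_deriv.mul (hu.continuous.pow
      2))).integrable_of_hasCompactSupport hu2.mul_left.mul_left).integrableOn
  have hint_right : IntegrableOn (fun r => r ^ n * (4 * (w r * deriv u r ^ 2))) (Ioi 0) :=
    (((continuous_pow n).mul (continuous_const.mul (h.continuous_weight.mul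
      ((hu.continuous_deriv le_rfl).pow 2)))).integrable_of_hasCompactSupport
      hdu2.mul_left.mul_left.mul_left).integrableOn
  have hψ_le : ∫ r in Ioi 0, deriv ψ r ≤ 0 := by
    rw [hψc.integral_Ioi_deriv_eq hψ1, neg_nonpos]
    exact mul_nonneg (mul_nonneg (by positivity) (h.nonneg 0)) (sq_nonneg _)
  calc ∫ r in Ioi 0, r ^ n * (k' r * u r ^ 2)
      ≤ ∫ r in Ioi 0, (r ^ n * (4 * (w r * deriv u r ^ 2)) + 2 * deriv ψ r) := by
        refine setIntegral_mono_on hint_left (hint_right.add (hint_deriv.const_mul 2))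
          measurableSet_Ioi fun r (hr : 0 < r) => ?_
        rw [h.deriv_pow_mul_mul_sq (hu.differentiable one_ne_zero)]
        have hlow : 0 ≤ n * r ^ (n - 1) * k r * u r ^ 2 := by
          have := h.nonneg r
          positivity
        have hmain := mul_le_mul_of_nonneg_left
          (h.deriv_mul_sq_le r (u r) (deriv u r)) (pow_nonneg hr.le n)
        linarith
    _ = (∫ r in Ioi 0, r ^ n * (4 * (w r * deriv u r ^ 2))) + 2 * ∫ r in Ioi 0, deriv ψ r := by
        rw [integral_add hint_right (hint_deriv.const_mul 2), integral_const_mul]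
    _ ≤ ∫ r in Ioi 0, r ^ n * (4 * (w r * deriv u r ^ 2)) := by linarith

end IsHardyMultiplier

end RadialMultiplier

section Polar

variable {E F : Type*} [NormedAddCommGroup E] [NormedSpace ℝ E] [NormedAddCommGroup F]

theorem smul_homeomorphUnitSphereProd (x : ({0}ᶜ : Set E)) :
    ((homeomorphUnitSphereProd E x).2 : ℝ) • ((homeomorphUnitSphereProd E x).1 : E) = x := by
  simp [smul_smul, norm_ne_zero_iff.2 x.2]

theorem integral_volumeIoiPow [NormedSpace ℝ F] (n : ℕ) (f : ℝ → F) :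
    ∫ r : Ioi (0 : ℝ), f r ∂(Measure.volumeIoiPow n) = ∫ r in Ioi (0 : ℝ), r ^ n • f r := by
  simp only [Measure.volumeIoiPow, ENNReal.ofReal]
  rw [integral_withDensity_eq_integral_smul (measurable_subtype_coe.pow_const n).real_toNNReal,
    integral_subtype_comap measurableSet_Ioi fun r => Real.toNNReal (r ^ n) • f r]
  refine setIntegral_congr_fun measurableSet_Ioi fun r (hr : 0 < r) => ?_
  simp only [NNReal.smul_def, Real.coe_toNNReal _ (pow_nonneg hr.le n)]

variable [FiniteDimensional ℝ E] [MeasurableSpace E] [BorelSpace E]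
  (μ : Measure E) [μ.IsAddHaarMeasure]

theorem integrable_polar {f : E → F} (hf : Integrable f μ) :
    Integrable (fun p : Metric.sphere (0 : E) 1 × Ioi (0 : ℝ) => f ((p.2 : ℝ) • (p.1 : E)))
      (μ.toSphere.prod (Measure.volumeIoiPow (finrank ℝ E - 1))) := by
  rw [← μ.measurePreserving_homeomorphUnitSphereProd.integrable_comp_emb
    (Homeomorph.measurableEmbedding _)]
  simp only [Function.comp_def, smul_homeomorphUnitSphereProd]
  exact (integrableOn_iff_comap_subtypeVal (measurableSet_singleton 0).compl).1 hf.integrableOn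

theorem integral_polar [Nontrivial E] [NormedSpace ℝ F] {f : E → F} (hf : Integrable f μ) :
    ∫ x, f x ∂μ = ∫ θ : Metric.sphere (0 : E) 1,
      (∫ r : Ioi (0 : ℝ), f ((r : ℝ) • (θ : E)) ∂(Measure.volumeIoiPow (finrank ℝ E - 1)))
        ∂μ.toSphere := by
  rw [← integral_prod _ (integrable_polar μ hf),
    ← μ.measurePreserving_homeomorphUnitSphereProd.integral_comp
      (Homeomorph.measurableEmbedding _)]
  simp only [smul_homeomorphUnitSphereProd]
  rw [integral_subtype_comap (measurableSet_singleton 0).compl, restrict_compl_singleton]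

theorem integral_mono_of_forall_ray [Nontrivial E] {f g : E → ℝ} (hf : Integrable f μ)
    (hg : Integrable g μ)
    (h : ∀ θ : E, ‖θ‖ = 1 → ∫ r in Ioi (0 : ℝ), r ^ (finrank ℝ E - 1) * f (r • θ)
      ≤ ∫ r in Ioi (0 : ℝ), r ^ (finrank ℝ E - 1) * g (r • θ)) :
    ∫ x, f x ∂μ ≤ ∫ x, g x ∂μ := by
  rw [integral_polar μ hf, integral_polar μ hg]
  refine integral_mono (integrable_polar μ hf).integral_prod_left
    (integrable_polar μ hg).integral_prod_left fun θ => ?_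
  simpa only [integral_volumeIoiPow _ fun r : ℝ => f (r • (θ : E)),
    integral_volumeIoiPow _ fun r : ℝ => g (r • (θ : E)), smul_eq_mul]
    using h θ (mem_sphere_zero_iff_norm.1 θ.2)

end Polar

section HardyNormed

variable {E : Type*} [NormedAddCommGroup E] [NormedSpace ℝ E]

theorem hasDerivAt_comp_ray {g : E → ℝ} (hg : Differentiable ℝ g) (θ : E) (r : ℝ) :
    HasDerivAt (fun r : ℝ => g (r • θ)) (fderiv ℝ g (r • θ) θ) r := by
  have hray : HasDerivAt (fun r : ℝ => r • θ) θ r := by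
    simpa using (hasDerivAt_id r).smul_const θ
  exact (hg (r • θ)).hasFDerivAt.comp_hasDerivAt r hray

theorem integrableOn_pow_mul_ray {f : E → ℝ} (hf : Continuous f) (hc : HasCompactSupport f)
    {θ : E} (hθ : θ ≠ 0) (n : ℕ) :
    IntegrableOn (fun r : ℝ => r ^ n * f (r • θ)) (Ioi 0) := by
  have hray : HasCompactSupport fun r : ℝ => f (r • θ) :=
    hc.comp_isClosedEmbedding (isClosedEmbedding_smul_left hθ)
  exact (((continuous_pow n).mul (hf.comp (by fun_prop))).integrable_of_hasCompactSupport
    hray.mul_left).integrableOn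

theorem continuous_mul_norm_fderiv_sq {w : ℝ → ℝ} (hw : Continuous w) {g : E → ℝ}
    (hg : ContDiff ℝ 1 g) : Continuous fun x => w ‖x‖ * ‖fderiv ℝ g x‖ ^ 2 :=
  (hw.comp continuous_norm).mul ((hg.continuous_fderiv one_ne_zero).norm.pow 2)

theorem hasCompactSupport_mul_norm_fderiv_sq (v : E → ℝ) {g : E → ℝ}
    (hc : HasCompactSupport g) : HasCompactSupport fun x => v x * ‖fderiv ℝ g x‖ ^ 2 :=
  ((hc.fderiv (𝕜 := ℝ)).norm.comp_left (g := (· ^ 2)) (by norm_num)).mul_left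

theorem IsHardyMultiplier.integral_ray_le {k k' w : ℝ → ℝ} (h : IsHardyMultiplier k k' w)
    {g : E → ℝ} (hg : ContDiff ℝ 1 g) (hc : HasCompactSupport g) {θ : E} (hθ : ‖θ‖ = 1) (n : ℕ) :
    ∫ r in Ioi (0 : ℝ), r ^ n * (k' ‖r • θ‖ * g (r • θ) ^ 2)
      ≤ ∫ r in Ioi (0 : ℝ), r ^ n * (4 * (w ‖r • θ‖ * ‖fderiv ℝ g (r • θ)‖ ^ 2)) := by
  have hθ0 : θ ≠ 0 := norm_ne_zero_iff.1 (by simp [hθ])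
  have hnorm : ∀ r ∈ Ioi (0 : ℝ), ‖r • θ‖ = r := fun r hr => by
    rw [norm_smul, hθ, mul_one, Real.norm_of_nonneg (le_of_lt hr)]
  set u : ℝ → ℝ := fun r => g (r • θ)
  have hu : ContDiff ℝ 1 u := hg.comp (contDiff_id.smul contDiff_const)
  have huc : HasCompactSupport u := hc.comp_isClosedEmbedding (isClosedEmbedding_smul_left hθ0)
  have hslope : ∀ r, deriv u r ^ 2 ≤ ‖fderiv ℝ g (r • θ)‖ ^ 2 := fun r => by
    rw [(hasDerivAt_comp_ray (hg.differentiable one_ne_zero) θ r).deriv, sq_le_sq, abs_norm]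
    simpa [hθ] using (fderiv ℝ g (r • θ)).le_opNorm θ
  calc ∫ r in Ioi 0, r ^ n * (k' ‖r • θ‖ * u r ^ 2)
      = ∫ r in Ioi 0, r ^ n * (k' r * u r ^ 2) :=
        setIntegral_congr_fun measurableSet_Ioi fun r hr => by simp only [hnorm r hr]
    _ ≤ ∫ r in Ioi 0, r ^ n * (4 * (w r * deriv u r ^ 2)) := h.integral_Ioi_le hu huc n
    _ ≤ ∫ r in Ioi 0, r ^ n * (4 * (w ‖r • θ‖ * ‖fderiv ℝ g (r • θ)‖ ^ 2)) := by
        refine integral_mono_of_nonneg ?_ (integrableOn_pow_mul_ray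
          (continuous_const.mul (continuous_mul_norm_fderiv_sq h.continuous_weight hg))
          (hasCompactSupport_mul_norm_fderiv_sq _ hc).mul_left hθ0 n) ?_
        all_goals
          filter_upwards [ae_restrict_mem measurableSet_Ioi] with r hr
          have hr0 : 0 < r := hr
          have hw := h.weight_nonneg r
        · positivity
        · simp only [hnorm r hr]
          gcongr r ^ n * (4 * (w r * ?_))
          exact hslope r

variable [FiniteDimensional ℝ E] [MeasurableSpace E] [BorelSpace E]
  (μ : Measure E) [μ.IsAddHaarMeasure]

theorem IsHardyMultiplier.integral_le [Nontrivial E] {k k' w : ℝ → ℝ}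
    (h : IsHardyMultiplier k k' w) {g : E → ℝ} (hg : ContDiff ℝ 1 g) (hc : HasCompactSupport g) :
    ∫ x, k' ‖x‖ * g x ^ 2 ∂μ ≤ 4 * ∫ x, w ‖x‖ * ‖fderiv ℝ g x‖ ^ 2 ∂μ := by
  have hg2 : HasCompactSupport fun x => g x ^ 2 := hc.comp_left (g := (· ^ 2)) (by norm_num)
  have hf : Continuous fun x => k' ‖x‖ * g x ^ 2 :=
    (h.continuous_deriv.comp continuous_norm).mul (hg.continuous.pow 2)
  rw [← integral_const_mul]
  exact integral_mono_of_forall_ray μ (hf.integrable_of_hasCompactSupport hg2.mul_left)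
    ((continuous_const.mul (continuous_mul_norm_fderiv_sq
      h.continuous_weight hg)).integrable_of_hasCompactSupport
      (hasCompactSupport_mul_norm_fderiv_sq _ hc).mul_left)
    fun θ hθ => h.integral_ray_le hg hc hθ _

end HardyNormed

section Wgt

variable {γ : ℝ}

theorem continuous_one_add_abs_rpow (a : ℝ) : Continuous fun q : ℝ => (1 + |q|) ^ a :=
  (continuous_const.add continuous_abs).rpow_const
    fun q => Or.inl (by positivity : (0 : ℝ) < 1 + |q|).ne'

theorem continuous_ite_nonneg {f g : ℝ → ℝ} (hf : Continuous f) (hg : Continuous g)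
    (h0 : f 0 = g 0) : Continuous fun q => if 0 ≤ q then f q else g q :=
  hf.if_le hg continuous_const continuous_id (by rintro _ rfl; exact h0)

theorem continuous_wgt (γ : ℝ) : Continuous (wgt γ) :=
  continuous_ite_nonneg (continuous_const.add (continuous_one_add_abs_rpow _))
    (continuous_const.add (continuous_one_add_abs_rpow _)) (by simp)

theorem one_le_wgt (γ q : ℝ) : 1 ≤ wgt γ q := by
  unfold wgt
  split_ifs <;> exact le_add_of_nonneg_right (by positivity)

/-- The multiplier `k` with `k 0 = 1` that yields the Hardy inequality for `wgt γ`: its derivative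
is comparable to `wgt γ q / (1 + |q|) ^ 2`. -/
noncomputable def wgtMultiplier (γ q : ℝ) : ℝ :=
  if 0 ≤ q then 1 + ((1 + |q|) ^ (2 * γ) - 1) / (2 * γ) else (1 + |q|) ^ (-1 : ℝ)

/-- The derivative of `wgtMultiplier γ`. -/
noncomputable def wgtMultiplierDeriv (γ q : ℝ) : ℝ :=
  if 0 ≤ q then (1 + |q|) ^ (2 * γ - 1) else (1 + |q|) ^ (-2 : ℝ)

theorem continuous_wgtMultiplier (γ : ℝ) : Continuous (wgtMultiplier γ) :=
  continuous_ite_nonneg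
    (continuous_const.add (((continuous_one_add_abs_rpow _).sub continuous_const).div_const _))
    (continuous_one_add_abs_rpow _) (by simp)

theorem continuous_wgtMultiplierDeriv (γ : ℝ) : Continuous (wgtMultiplierDeriv γ) :=
  continuous_ite_nonneg (continuous_one_add_abs_rpow _) (continuous_one_add_abs_rpow _) (by simp)

theorem wgtMultiplierDeriv_pos (γ q : ℝ) : 0 < wgtMultiplierDeriv γ q := by
  unfold wgtMultiplierDeriv
  split_ifs <;> positivity

theorem hasDerivAt_one_add_abs_rpow (a : ℝ) {q : ℝ} (hq : q ≠ 0) :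
    HasDerivAt (fun q : ℝ => (1 + |q|) ^ a) (SignType.sign q * a * (1 + |q|) ^ (a - 1)) q :=
  ((hasDerivAt_abs hq).const_add 1).rpow_const
    (Or.inl (by positivity : (0 : ℝ) < 1 + |q|).ne')

theorem hasDerivAt_wgtMultiplier (hγ : γ ≠ 0) (q : ℝ) :
    HasDerivAt (wgtMultiplier γ) (wgtMultiplierDeriv γ q) q := by
  refine hasDerivAt_of_hasDerivAt_of_ne' (x := 0) (fun q hq => ?_)
    (continuous_wgtMultiplier γ).continuousAt (continuous_wgtMultiplierDeriv γ).continuousAt q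
  rcases hq.lt_or_gt with hneg | hpos
  · refine ((hasDerivAt_one_add_abs_rpow (-1) hq).congr_of_eventuallyEq ?_).congr_deriv ?_
    · filter_upwards [eventually_lt_nhds hneg] with y hy
      exact if_neg hy.not_ge
    · norm_num [wgtMultiplierDeriv, hneg, hneg.not_ge]
  · refine (((((hasDerivAt_one_add_abs_rpow (2 * γ) hq).sub_const 1).div_const
      (2 * γ)).const_add 1).congr_of_eventuallyEq ?_).congr_deriv ?_
    · filter_upwards [eventually_gt_nhds hpos] with y hy
      exact if_pos hy.le
    · simp only [wgtMultiplierDeriv, if_pos hpos.le, sign_pos hpos, SignType.coe_one]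
      field_simp

theorem wgtMultiplier_nonneg (hγ : 0 < γ) (q : ℝ) : 0 ≤ wgtMultiplier γ q := by
  unfold wgtMultiplier
  split_ifs
  · have hone : 0 ≤ (1 + |q|) ^ (2 * γ) - 1 :=
      sub_nonneg.2 (Real.one_le_rpow (by simp) (by positivity))
    positivity
  · positivity

theorem wgtMultiplier_sq_le (hγ : 0 < γ) (q : ℝ) :
    wgtMultiplier γ q ^ 2 ≤ wgtMultiplierDeriv γ q * ((1 + 1 / (2 * γ)) ^ 2 * wgt γ q) := by
  have hnonneg := wgtMultiplier_nonneg hγ q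
  have hbase : (0 : ℝ) < 1 + |q| := by positivity
  unfold wgtMultiplier wgtMultiplierDeriv wgt at *
  split_ifs at * with hq
  · have hone : 1 ≤ (1 + |q|) ^ (2 * γ) := Real.one_le_rpow (by simp) (by positivity)
    calc (1 + ((1 + |q|) ^ (2 * γ) - 1) / (2 * γ)) ^ 2
        ≤ ((1 + 1 / (2 * γ)) * (1 + |q|) ^ (2 * γ)) ^ 2 := by
          gcongr
          have : 0 ≤ 1 / (2 * γ) := by positivity
          linear_combination hone + this
      _ = (1 + |q|) ^ (2 * γ - 1) * ((1 + 1 / (2 * γ)) ^ 2 * (1 + |q|) ^ (1 + 2 * γ)) := by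
          rw [mul_left_comm, ← Real.rpow_add hbase, mul_pow, ← Real.rpow_mul_natCast hbase.le]
          ring_nf
      _ ≤ (1 + |q|) ^ (2 * γ - 1) * ((1 + 1 / (2 * γ)) ^ 2 * (1 + (1 + |q|) ^ (1 + 2 * γ))) := by
          gcongr
          linarith
  · have hconst : 1 ≤ (1 + 1 / (2 * γ)) ^ 2 * (1 + (1 + |q|) ^ (-(γ / 2))) :=
      one_le_mul_of_one_le_of_one_le
        (one_le_pow₀ (le_add_of_nonneg_right (by positivity)))
        (le_add_of_nonneg_right (by positivity))
    calc ((1 + |q|) ^ (-1 : ℝ)) ^ 2 = (1 + |q|) ^ (-2 : ℝ) := by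
          rw [← Real.rpow_mul_natCast hbase.le]
          norm_num
      _ ≤ _ := le_mul_of_one_le_right (by positivity) hconst

theorem isHardyMultiplier_wgtMultiplier (hγ : 0 < γ) :
    IsHardyMultiplier (wgtMultiplier γ) (wgtMultiplierDeriv γ)
      fun q => (1 + 1 / (2 * γ)) ^ 2 * wgt γ q where
  hasDerivAt := hasDerivAt_wgtMultiplier hγ.ne'
  continuous_deriv := continuous_wgtMultiplierDeriv γ
  continuous_weight := continuous_const.mul (continuous_wgt γ)
  nonneg := wgtMultiplier_nonneg hγ
  deriv_pos := wgtMultiplierDeriv_pos γ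
  sq_le := wgtMultiplier_sq_le hγ

theorem wgt_div_sq_le (hγ : 0 < γ) (q : ℝ) :
    wgt γ q / (1 + |q|) ^ 2 ≤ 2 * wgtMultiplierDeriv γ q := by
  have hbase : (0 : ℝ) < 1 + |q| := by positivity
  rw [div_le_iff₀ (by positivity), mul_assoc, ← Real.rpow_natCast (1 + |q|)]
  unfold wgt wgtMultiplierDeriv
  split_ifs with hq
  · have hone : 1 ≤ (1 + |q|) ^ (1 + 2 * γ) := Real.one_le_rpow (by simp) (by positivity)
    have hexp : 2 * γ - 1 + ((2 : ℕ) : ℝ) = 1 + 2 * γ := by push_cast; ring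
    rw [← Real.rpow_add hbase, hexp]
    linarith
  · have hone : (1 + |q|) ^ (-(γ / 2)) ≤ 1 :=
      Real.rpow_le_one_of_one_le_of_nonpos (by simp) (by linarith)
    have hexp : (-2 : ℝ) + ((2 : ℕ) : ℝ) = 0 := by norm_num
    rw [← Real.rpow_add hbase, hexp, Real.rpow_zero]
    linarith

end Wgt

section Potential

variable {γ δ τ : ℝ}

/-- The integrand of the potential-type term at time `τ` and radius `r`, for the value `u` of the
function, with `δ` in the role of `δ₀`. -/
noncomputable def potentialDensity (γ δ τ r u : ℝ) : ℝ :=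
  Real.log (2 + τ + r) ^ 2 * u ^ 2 * wgt γ (r - τ)
    / ((1 + τ + r) ^ (4 - 4 * δ) * (1 + |r - τ|) ^ (2 * γ + 4 * δ))

theorem log_one_add_sq_le (hγ : 0 < γ) {s : ℝ} (hs : 1 ≤ s) :
    Real.log (1 + s) ^ 2 ≤ 2 ^ γ * (2 / γ) ^ 2 * s ^ γ := by
  have hlog : Real.log (1 + s) ≤ (2 * s) ^ (γ / 2) * (2 / γ) :=
    calc Real.log (1 + s) ≤ Real.log (2 * s) := Real.log_le_log (by linarith) (by linarith)
      _ ≤ (2 * s) ^ (γ / 2) / (γ / 2) := Real.log_le_rpow_div (by linarith) (by positivity)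
      _ = (2 * s) ^ (γ / 2) * (2 / γ) := by rw [div_eq_mul_inv, inv_div]
  calc Real.log (1 + s) ^ 2 ≤ ((2 * s) ^ (γ / 2) * (2 / γ)) ^ 2 := by
        have := Real.log_nonneg (by linarith : 1 ≤ 1 + s)
        gcongr
    _ = (2 * s) ^ γ * (2 / γ) ^ 2 := by
        rw [mul_pow, ← Real.rpow_mul_natCast (by linarith), Nat.cast_ofNat,
          div_mul_cancel₀ γ two_ne_zero]
    _ = 2 ^ γ * (2 / γ) ^ 2 * s ^ γ := by
        rw [Real.mul_rpow zero_le_two (by linarith)]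
        ring

theorem rpow_div_mul_rpow_le (hδ : γ + 2 * δ ≤ 1) {s b : ℝ} (hb : 0 < b) (hbs : b ≤ s) :
    s ^ γ / (s ^ (4 - 4 * δ) * b ^ (2 * γ + 4 * δ)) ≤ s ^ (-2 - γ) / b ^ 2 := by
  have hs : 0 < s := hb.trans_le hbs
  rw [div_le_div_iff₀ (by positivity) (by positivity)]
  calc s ^ γ * b ^ 2 = s ^ γ * (b ^ (2 - 2 * γ - 4 * δ) * b ^ (2 * γ + 4 * δ)) := by
        rw [← Real.rpow_add hb, ← Real.rpow_natCast]
        ring_nf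
    _ ≤ s ^ γ * (s ^ (2 - 2 * γ - 4 * δ) * b ^ (2 * γ + 4 * δ)) := by
        gcongr
        linarith
    _ = s ^ (-2 - γ) * (s ^ (4 - 4 * δ) * b ^ (2 * γ + 4 * δ)) := by
        rw [← mul_assoc, ← mul_assoc, ← Real.rpow_add hs, ← Real.rpow_add hs]
        ring_nf

theorem potentialDensity_nonneg (γ δ : ℝ) (hτ : 0 ≤ τ) {r : ℝ} (hr : 0 ≤ r) (u : ℝ) :
    0 ≤ potentialDensity γ δ τ r u := by
  have := zero_le_one.trans (one_le_wgt γ (r - τ))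
  unfold potentialDensity
  positivity

theorem potentialDensity_le (hγ : 0 < γ) (hδ : γ + 2 * δ ≤ 1) (hτ : 0 < τ) {r : ℝ} (hr : 0 ≤ r)
    (u : ℝ) :
    potentialDensity γ δ τ r u
      ≤ 2 ^ γ * (2 / γ) ^ 2 * τ ^ (-2 - γ) * (wgt γ (r - τ) / (1 + |r - τ|) ^ 2 * u ^ 2) := by
  have hw : 0 ≤ wgt γ (r - τ) := zero_le_one.trans (one_le_wgt γ _)
  have hlog : Real.log (2 + τ + r) ^ 2 ≤ 2 ^ γ * (2 / γ) ^ 2 * (1 + τ + r) ^ γ := by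
    convert log_one_add_sq_le hγ (by linarith : 1 ≤ 1 + τ + r) using 3
    ring
  have hbase : 1 + |r - τ| ≤ 1 + τ + r := by
    have : |r - τ| ≤ τ + r := abs_le.2 ⟨by linarith, by linarith⟩
    linarith
  calc potentialDensity γ δ τ r u
      ≤ 2 ^ γ * (2 / γ) ^ 2 * (1 + τ + r) ^ γ * u ^ 2 * wgt γ (r - τ)
          / ((1 + τ + r) ^ (4 - 4 * δ) * (1 + |r - τ|) ^ (2 * γ + 4 * δ)) := by
        unfold potentialDensity
        gcongr
    _ = 2 ^ γ * (2 / γ) ^ 2 * u ^ 2 * wgt γ (r - τ) * ((1 + τ + r) ^ γ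
          / ((1 + τ + r) ^ (4 - 4 * δ) * (1 + |r - τ|) ^ (2 * γ + 4 * δ))) := by ring
    _ ≤ 2 ^ γ * (2 / γ) ^ 2 * u ^ 2 * wgt γ (r - τ)
          * ((1 + τ + r) ^ (-2 - γ) / (1 + |r - τ|) ^ 2) := by
        gcongr ?_ * ?_
        exact rpow_div_mul_rpow_le hδ (by positivity) hbase
    _ ≤ 2 ^ γ * (2 / γ) ^ 2 * u ^ 2 * wgt γ (r - τ) * (τ ^ (-2 - γ) / (1 + |r - τ|) ^ 2) := by
        gcongr ?_ * (?_ / ?_)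
        exact Real.rpow_le_rpow_of_nonpos hτ (by linarith) (by linarith)
    _ = _ := by ring

end Potential

section Slice

variable {γ δ τ : ℝ}

theorem continuous_wgt_div_sq {E : Type*} [SeminormedAddCommGroup E] (γ τ : ℝ) :
    Continuous fun x : E => wgt γ (‖x‖ - τ) / (1 + |‖x‖ - τ|) ^ 2 := by
  have := continuous_wgt γ
  fun_prop (disch := intro x; positivity)

variable {E : Type*} [NormedAddCommGroup E] [NormedSpace ℝ E] [FiniteDimensional ℝ E]
  [Nontrivial E] [MeasurableSpace E] [BorelSpace E] (μ : Measure E) [μ.IsAddHaarMeasure]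

theorem integral_wgt_div_sq_mul_sq_le (hγ : 0 < γ) (τ : ℝ) {g : E → ℝ} (hg : ContDiff ℝ 1 g)
    (hc : HasCompactSupport g) :
    ∫ x, wgt γ (‖x‖ - τ) / (1 + |‖x‖ - τ|) ^ 2 * g x ^ 2 ∂μ
      ≤ 8 * (1 + 1 / (2 * γ)) ^ 2 * ∫ x, ‖fderiv ℝ g x‖ ^ 2 * wgt γ (‖x‖ - τ) ∂μ := by
  have hg2 : HasCompactSupport fun x => g x ^ 2 := hc.comp_left (g := (· ^ 2)) (by norm_num)
  have hmult := (isHardyMultiplier_wgtMultiplier hγ).comp_sub_const τ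
  have hcont : Continuous fun x : E => wgtMultiplierDeriv γ (‖x‖ - τ) * g x ^ 2 :=
    (hmult.continuous_deriv.comp continuous_norm).mul (hg.continuous.pow 2)
  calc ∫ x, wgt γ (‖x‖ - τ) / (1 + |‖x‖ - τ|) ^ 2 * g x ^ 2 ∂μ
      ≤ ∫ x, 2 * (wgtMultiplierDeriv γ (‖x‖ - τ) * g x ^ 2) ∂μ := by
        refine integral_mono
          (((continuous_wgt_div_sq γ τ).mul (hg.continuous.pow 2)).integrable_of_hasCompactSupport
            hg2.mul_left)
          ((hcont.integrable_of_hasCompactSupport hg2.mul_left).const_mul 2) fun x => ?_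
        simp only [← mul_assoc]
        gcongr
        exact wgt_div_sq_le hγ _
    _ = 2 * ∫ x, wgtMultiplierDeriv γ (‖x‖ - τ) * g x ^ 2 ∂μ := integral_const_mul _ _
    _ ≤ 2 * (4 * ∫ x, (1 + 1 / (2 * γ)) ^ 2 * wgt γ (‖x‖ - τ) * ‖fderiv ℝ g x‖ ^ 2 ∂μ) := by
        gcongr
        exact hmult.integral_le μ hg hc
    _ = _ := by
        simp only [mul_assoc, integral_const_mul, mul_comm (wgt γ _)]
        ring

/-- The constant in the fixed-time estimate of the potential-type term. -/
noncomputable def potentialConst (γ : ℝ) : ℝ :=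
  2 ^ γ * (2 / γ) ^ 2 * (8 * (1 + 1 / (2 * γ)) ^ 2)

theorem potentialConst_pos (hγ : 0 < γ) : 0 < potentialConst γ := by
  unfold potentialConst
  positivity

theorem integral_potentialDensity_norm_le (hγ : 0 < γ) (hδ : γ + 2 * δ ≤ 1) (hτ : 0 < τ)
    {g : E → ℝ} (hg : ContDiff ℝ 1 g) (hc : HasCompactSupport g) :
    ∫ x, potentialDensity γ δ τ ‖x‖ (g x) ∂μ
      ≤ potentialConst γ * τ ^ (-2 - γ) * ∫ x, ‖fderiv ℝ g x‖ ^ 2 * wgt γ (‖x‖ - τ) ∂μ := by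
  have hg2 : HasCompactSupport fun x => g x ^ 2 := hc.comp_left (g := (· ^ 2)) (by norm_num)
  calc ∫ x, potentialDensity γ δ τ ‖x‖ (g x) ∂μ
      ≤ ∫ x, 2 ^ γ * (2 / γ) ^ 2 * τ ^ (-2 - γ)
          * (wgt γ (‖x‖ - τ) / (1 + |‖x‖ - τ|) ^ 2 * g x ^ 2) ∂μ :=
        integral_mono_of_nonneg
          (.of_forall fun x => potentialDensity_nonneg γ δ hτ.le (norm_nonneg x) (g x))
          ((((continuous_wgt_div_sq γ τ).mul
            (hg.continuous.pow 2)).integrable_of_hasCompactSupport hg2.mul_left).const_mul _)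
          (.of_forall fun x => potentialDensity_le hγ hδ hτ (norm_nonneg x) (g x))
    _ = 2 ^ γ * (2 / γ) ^ 2 * τ ^ (-2 - γ)
          * ∫ x, wgt γ (‖x‖ - τ) / (1 + |‖x‖ - τ|) ^ 2 * g x ^ 2 ∂μ := integral_const_mul _ _
    _ ≤ 2 ^ γ * (2 / γ) ^ 2 * τ ^ (-2 - γ) * (8 * (1 + 1 / (2 * γ)) ^ 2
          * ∫ x, ‖fderiv ℝ g x‖ ^ 2 * wgt γ (‖x‖ - τ) ∂μ) := by
        gcongr
        exact integral_wgt_div_sq_mul_sq_le μ hγ τ hg hc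
    _ = _ := by
        unfold potentialConst
        ring

end Slice

section Coordinates

variable {ι : Type*} [Fintype ι]

theorem norm_fderiv_comp_ofLp_sq [DecidableEq ι] (g : (ι → ℝ) → ℝ) (y : EuclideanSpace ℝ ι) :
    ‖fderiv ℝ (fun z : EuclideanSpace ℝ ι => g z.ofLp) y‖ ^ 2
      = ∑ i, fderiv ℝ g y.ofLp (Pi.single i 1) ^ 2 := by
  have hchain : fderiv ℝ (fun z : EuclideanSpace ℝ ι => g z.ofLp) y
      = (fderiv ℝ g y.ofLp).comp (EuclideanSpace.equiv ι ℝ : EuclideanSpace ℝ ι →L[ℝ] ι → ℝ) :=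
    (EuclideanSpace.equiv ι ℝ).comp_right_fderiv
  rw [hchain, (EuclideanSpace.basisFun ι ℝ).norm_dual]
  simp [PiLp.coe_continuousLinearEquiv]

theorem integral_comp_ofLp (f : (ι → ℝ) → ℝ) :
    ∫ y : EuclideanSpace ℝ ι, f y.ofLp = ∫ x, f x :=
  (PiLp.volume_preserving_ofLp ι).integral_comp
    (MeasurableEquiv.toLp 2 (ι → ℝ)).symm.measurableEmbedding f

theorem integral_potentialDensity_le [DecidableEq ι] [Nonempty ι] {γ δ τ : ℝ} (hγ : 0 < γ)
    (hδ : γ + 2 * δ ≤ 1) (hτ : 0 < τ) {g : (ι → ℝ) → ℝ} (hg : ContDiff ℝ 1 g)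
    (hc : HasCompactSupport g) :
    ∫ x, potentialDensity γ δ τ √(∑ i, x i ^ 2) (g x)
      ≤ potentialConst γ * τ ^ (-2 - γ)
        * ∫ x, (∑ i, fderiv ℝ g x (Pi.single i 1) ^ 2) * wgt γ (√(∑ i, x i ^ 2) - τ) := by
  have hslice := integral_potentialDensity_norm_le (volume : Measure (EuclideanSpace ℝ ι)) hγ hδ hτ
    (hg.comp (EuclideanSpace.equiv ι ℝ).contDiff)
    (hc.comp_homeomorph (EuclideanSpace.equiv ι ℝ).toHomeomorph)
  rw [← integral_comp_ofLp, ← integral_comp_ofLp]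
  simpa only [Function.comp_def, PiLp.coe_continuousLinearEquiv,
    ContinuousLinearEquiv.coe_toHomeomorph, EuclideanSpace.norm_eq, Real.norm_eq_abs, sq_abs,
    norm_fderiv_comp_ofLp_sq] using hslice

theorem measurable_integral_potentialDensity (γ δ : ℝ) {G : ℝ → (ι → ℝ) → ℝ}
    (hG : Continuous fun q : ℝ × (ι → ℝ) => G q.1 q.2) :
    Measurable fun τ => ∫ x, potentialDensity γ δ τ √(∑ i, x i ^ 2) (G τ x) := by
  have hw := (continuous_wgt γ).measurable
  have hGm := hG.measurable
  refine (StronglyMeasurable.integral_prod_right (Measurable.stronglyMeasurable ?_)).measurable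
  unfold Function.uncurry potentialDensity
  fun_prop

end Coordinates

section Time

variable {γ T t : ℝ}

theorem integrableOn_Icc_rpow (a : ℝ) (hT : 0 < T) (t : ℝ) :
    IntegrableOn (fun τ : ℝ => τ ^ a) (Icc T t) :=
  ContinuousOn.integrableOn_Icc fun τ hτ =>
    (Real.continuousAt_rpow_const τ a (.inl (hT.trans_le hτ.1).ne')).continuousWithinAt

theorem setIntegral_Icc_rpow_le {b : ℝ} (hb : 0 < b) (hT : 0 < T) (t : ℝ) :
    ∫ τ in Icc T t, τ ^ (-1 - b) ≤ T ^ (-b) / b := by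
  have hexp : -1 - b < -1 := by linarith
  calc ∫ τ in Icc T t, τ ^ (-1 - b) = ∫ τ in Ioc T t, τ ^ (-1 - b) := integral_Icc_eq_integral_Ioc
    _ ≤ ∫ τ in Ioi T, τ ^ (-1 - b) := by
        refine setIntegral_mono_set (integrableOn_Ioi_rpow_of_lt hexp hT) ?_
          Ioc_subset_Ioi_self.eventuallyLE
        filter_upwards [ae_restrict_mem measurableSet_Ioi] with τ hτ
        exact Real.rpow_nonneg (hT.trans hτ).le _
    _ = T ^ (-b) / b := by
        rw [integral_Ioi_rpow_of_lt hexp hT, show -1 - b + 1 = -b by ring, neg_div_neg_eq]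

theorem sqrt_le_of_le_mul_rpow_mul {C τ a e M : ℝ} (hC : 0 ≤ C) (hτ : 0 < τ)
    (ha : a ≤ C * τ ^ (-2 - γ) * e) (he : √e ≤ M) : √a ≤ √C * M * τ ^ (-1 - γ / 2) := by
  have hroot : √(τ ^ (-2 - γ)) = τ ^ (-1 - γ / 2) := by
    rw [Real.sqrt_eq_rpow, ← Real.rpow_mul hτ.le]
    ring_nf
  calc √a ≤ √(C * τ ^ (-2 - γ) * e) := Real.sqrt_le_sqrt ha
    _ = √C * τ ^ (-1 - γ / 2) * √e := by
        rw [Real.sqrt_mul (by positivity), Real.sqrt_mul hC, hroot]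
    _ ≤ √C * τ ^ (-1 - γ / 2) * M := by gcongr
    _ = √C * M * τ ^ (-1 - γ / 2) := by ring

theorem integrableOn_and_setIntegral_sqrt_le {C M : ℝ} (hγ : 0 < γ) (hC : 0 ≤ C) (hT : 0 < T)
    (hTt : T ≤ t) {A e : ℝ → ℝ} (hA : Measurable A)
    (hAe : ∀ τ ∈ Icc T t, A τ ≤ C * τ ^ (-2 - γ) * e τ) (he : ∀ τ ∈ Icc T t, √(e τ) ≤ M) :
    IntegrableOn (fun τ => √(A τ)) (Icc T t) ∧
      ∫ τ in Icc T t, √(A τ) ≤ √C * (2 / γ) * T ^ (-(γ / 2)) * M := by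
  have hM : 0 ≤ M := (Real.sqrt_nonneg _).trans (he T ⟨le_rfl, hTt⟩)
  have hdom : IntegrableOn (fun τ => √C * M * τ ^ (-1 - γ / 2)) (Icc T t) :=
    (integrableOn_Icc_rpow _ hT t).const_mul _
  have hle : ∀ τ ∈ Icc T t, √(A τ) ≤ √C * M * τ ^ (-1 - γ / 2) := fun τ hτ =>
    sqrt_le_of_le_mul_rpow_mul hC (hT.trans_le hτ.1) (hAe τ hτ) (he τ hτ)
  have hint : IntegrableOn (fun τ => √(A τ)) (Icc T t) := by
    refine hdom.mono' hA.sqrt.aestronglyMeasurable ?_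
    filter_upwards [ae_restrict_mem measurableSet_Icc] with τ hτ
    rw [Real.norm_of_nonneg (Real.sqrt_nonneg _)]
    exact hle τ hτ
  refine ⟨hint, ?_⟩
  calc ∫ τ in Icc T t, √(A τ) ≤ ∫ τ in Icc T t, √C * M * τ ^ (-1 - γ / 2) :=
        setIntegral_mono_on hint hdom measurableSet_Icc hle
    _ = √C * M * ∫ τ in Icc T t, τ ^ (-1 - γ / 2) := integral_const_mul _ _
    _ ≤ √C * M * (T ^ (-(γ / 2)) / (γ / 2)) := by
        gcongr
        exact setIntegral_Icc_rpow_le (half_pos hγ) hT t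
    _ = _ := by
        field_simp

end Time

theorem stmt19_general {ι : Type*} [Fintype ι] [DecidableEq ι] [Nonempty ι] {γ δ : ℝ}
    (hγ : 0 < γ) (hδ : γ + 2 * δ ≤ 1) :
    ∃ C > (0 : ℝ), ∀ T t : ℝ, 0 < T → T ≤ t →
      ∀ G : ℝ → (ι → ℝ) → ℝ,
        (∀ τ ∈ Icc T t, ContDiff ℝ 1 (G τ) ∧ HasCompactSupport (G τ)) →
        Continuous (fun q : ℝ × (ι → ℝ) => G q.1 q.2) →
      ∀ M : ℝ,
        (∀ τ ∈ Icc T t,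
          √(∫ x, (∑ i, fderiv ℝ (G τ) x (Pi.single i 1) ^ 2)
            * wgt γ (√(∑ i, x i ^ 2) - τ)) ≤ M) →
      IntegrableOn (fun τ => √(∫ x, potentialDensity γ δ τ √(∑ i, x i ^ 2) (G τ x))) (Icc T t) ∧
        ∫ τ in Icc T t, √(∫ x, potentialDensity γ δ τ √(∑ i, x i ^ 2) (G τ x))
          ≤ C * T ^ (-(γ / 2)) * M := by
  have hC := potentialConst_pos hγ
  refine ⟨√(potentialConst γ) * (2 / γ), by positivity, fun T t hT hTt G hG hGc M hM => ?_⟩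
  exact integrableOn_and_setIntegral_sqrt_le hγ hC.le hT hTt
    (measurable_integral_potentialDensity γ δ hGc)
    (fun τ hτ => integral_potentialDensity_le hγ hδ (hT.trans_le hτ.1) (hG τ hτ).1 (hG τ hτ).2) hM

/-- `L¹`-in-time bound for the potential-type term via the Hardy
inequality: for `γ ∈ (0,1/8]`, `δ₀ ∈ (0,γ/16]` there is `C = C(γ,δ₀)` such that for all
`0 < T ≤ t` and all spatially `C¹`, spatially compactly supported `G` (jointly continuous
with its spatial gradient), if `M` bounds
`(∫ |∇G(τ,·)|² w(|·|−τ))^{1/2}` for all `τ ∈ [T,t]`, then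
`∫_T^t (∫ log²(2+s) G² w/((1+s)^{4−4δ₀}(1+|q|)^{2γ+4δ₀}))^{1/2} dτ ≤ C T^{−γ/2} M`. -/
theorem stmt19 (γ δ₀ : ℝ) (hγ0 : 0 < γ) (hγ1 : γ ≤ 1 / 8)
    (hδ₀0 : 0 < δ₀) (hδ₀1 : δ₀ ≤ γ / 16) :
    ∃ C > (0 : ℝ), ∀ T t : ℝ, 0 < T → T ≤ t →
      ∀ G : ℝ → (Fin 3 → ℝ) → ℝ,
        (∀ τ ∈ Set.Icc T t, ContDiff ℝ 1 (G τ) ∧ HasCompactSupport (G τ)) →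
        Continuous (fun q : ℝ × (Fin 3 → ℝ) => G q.1 q.2) →
        (∀ i : Fin 3, Continuous fun q : ℝ × (Fin 3 → ℝ) => pd3 i (G q.1) q.2) →
      ∀ M : ℝ,
        (∀ τ ∈ Set.Icc T t,
          Real.sqrt (∫ x : Fin 3 → ℝ,
            (∑ i : Fin 3, (pd3 i (G τ) x) ^ 2) * wgt γ (rad3 x - τ)) ≤ M) →
      (∫ τ in Set.Icc T t,
        Real.sqrt (∫ x : Fin 3 → ℝ,
          (Real.log (2 + τ + rad3 x)) ^ 2 * (G τ x) ^ 2 * wgt γ (rad3 x - τ)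
            / ((1 + τ + rad3 x) ^ (4 - 4 * δ₀)
                * (1 + |rad3 x - τ|) ^ (2 * γ + 4 * δ₀))))
      ≤ C * T ^ (-(γ / 2)) * M := by
  obtain ⟨C, hC, h⟩ := stmt19_general (ι := Fin 3) hγ0 (by linarith : γ + 2 * δ₀ ≤ 1)
  exact ⟨C, hC, fun T t hT hTt G hG hGc _ M hM => (h T t hT hTt G hG hGc M hM).2⟩
end
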